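/- (Banach-valued Kolmogorov continuity criterion.) Let 𝔹 be a Banach space and X ∈ C^{k,a}(ℝⁿ; L^p(ℱ;𝔹)) with k + a > n/p + j for some nonnegative integer j. Then there is a unique mapping X̃: ℝⁿ×Ω → 𝔹 such that (i) for each ω, X̃(·,ω) ∈ C^j(ℝⁿ;𝔹); (ii) for each x, X̃(x,·) is ℱ-measurable, and for every multi-index γ with 0 ≤ |γ| ≤ j the derivatives ∂^γ X̃(x,·) are indistinguishable from the derivatives ∂^γ X in L^p(ℱ;𝔹). Moreover, if B = B(x₀,R) is a ball in ℝⁿ, there is a constant C_{k,a,p,B} such that ‖ ‖X̃(·,·)‖_{C^j(B;𝔹)} ‖_{L^p} ≤ C_{k,a,p,B}‖X‖_{C^{k,a}(B;L^p)} for all X ∈ C^{k,a}(ℝⁿ;L^p(ℱ;𝔹)). -/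

import Mathlib

/-!
The regular version is built by Taylor expansion on dyadic grids. Let `q` be the integrability
exponent and cover a ball by the grid of mesh `2⁻ᵐ`, about `2^{nm}` points. At each grid point `c`
the Taylor polynomial of `X` of order `k` has coefficients in `L^q`; choosing a representative of
each of these countably many coefficients gives random polynomials that are continuous (indeed
polynomial) for every `ω`. By Taylor's formula with Hölder remainder, the Taylor polynomials at
neighbouring points of consecutive grids differ in `L^q` by at most a constant times
`2^{-m(k+a)}`, uniformly near these points, and as polynomials of bounded degree they do so together
with their pathwise supremum. Taking the maximum over the grid costs a factor `2^{nm/q}` in `L^q`,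
so the differences along the levels are dominated by a geometric series as soon as `n/q < k + a`.
The limit exists uniformly on balls for almost every `ω`, it is continuous, it is a version of `X`,
and the norm of its supremum in `L^q` is bounded by the `C^{k,a}` norm of `X` on the ball
(`exists_continuous_version`, `exists_core_bd`).

For derivatives, `exists_smooth_version` proceeds by induction on `j`: the partial derivatives of
`X` are of class `C^{k-1,a}` and have regular versions of class `C^{j-1}`. Integrating these along
segments from the origin gives a version of `X`, because the Riemann sums converge both pathwise and
in `L^q`; it has the regular versions of the partial derivatives as its partial derivatives.
Conversely, the pathwise derivatives of any smooth version are versions of the derivatives in `L^q`,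
since both are limits of the same difference quotients (`iteratedFDeriv_version`). The moment bound
(`exists_moment_bd`) is the maximal inequality applied to each of the finitely many partial
derivatives of order at most `j`, and uniqueness holds because two continuous versions agree almost
surely on a countable dense set.
-/

open MeasureTheory Set Filter Function Metric

noncomputable section

/-! ### Taylor polynomials of Hölder-differentiable maps -/

/-- The Taylor polynomial of order `k` of `f` at `c`, evaluated at `x`. -/
def tay {E F : Type*} [NormedAddCommGroup E] [NormedSpace ℝ E] [NormedAddCommGroup F]
    [NormedSpace ℝ F] (k : ℕ) (f : E → F) (c x : E) : F :=
  ∑ i ∈ Finset.range (k + 1),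
    ((Nat.factorial i : ℝ)⁻¹) • iteratedFDeriv ℝ i f c (fun _ => x - c)

/-- Taking `i` derivatives commutes with evaluating a map with values in linear maps. -/
lemma iteratedFDeriv_clm_eval {E F G : Type*} [NormedAddCommGroup E] [NormedSpace ℝ E]
    [NormedAddCommGroup F] [NormedSpace ℝ F] [NormedAddCommGroup G] [NormedSpace ℝ G]
    (i : ℕ) (L : F →L[ℝ] G) (g : E → F) (hg : ContDiff ℝ i g)
    (c : E) (w : Fin i → E) :
    iteratedFDeriv ℝ i (fun y => L (g y)) c w = L (iteratedFDeriv ℝ i g c w) := by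
  have := L.iteratedFDeriv_comp_left (x := c) hg.contDiffAt (le_refl (i : WithTop ℕ∞))
  exact congrArg (fun M => M w) this

/-- The derivative of `x ↦ Dⁱ⁺¹f(c)(x - c, …, x - c)`. The symmetry of higher derivatives enters
only through the symmetry of the second derivative of `f`, applied at each step of the
induction. -/
lemma hasFDerivAt_iteratedFDeriv_diag {E : Type} [NormedAddCommGroup E] [NormedSpace ℝ E]
    (i : ℕ) : ∀ {F : Type*} [NormedAddCommGroup F] [NormedSpace ℝ F] (f : E → F)
    (_ : ContDiff ℝ (i + 1 : ℕ) f) (c x : E),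
    HasFDerivAt (fun x => iteratedFDeriv ℝ (i + 1) f c (fun _ => x - c))
      (((i : ℝ) + 1) • iteratedFDeriv ℝ i (fderiv ℝ f) c (fun _ => x - c)) x := by
  induction i with
  | zero =>
    intro F _ _ f hf c x
    have e1 : (fun x => iteratedFDeriv ℝ (0 + 1) f c (fun _ => x - c)) =
        fun y => fderiv ℝ f c (id y - c) := by
      funext y
      exact iteratedFDeriv_one_apply _
    rw [e1]
    refine ((fderiv ℝ f c).hasFDerivAt.comp x ((hasFDerivAt_id x).sub_const c)).congr_fderiv ?_
    ext v
    simp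
  | succ i ih =>
    intro F _ _ f hf c x
    have hdf : ContDiff ℝ (i + 1 : ℕ) (fderiv ℝ f) :=
      hf.fderiv_right (by norm_cast)
    have hddf : ContDiff ℝ (i : ℕ) (fderiv ℝ (fderiv ℝ f)) :=
      hdf.fderiv_right (by norm_cast)
    have h1 := ih (fderiv ℝ f) hdf c x
    have h2 : HasFDerivAt (fun x : E => x - c) (ContinuousLinearMap.id ℝ E) x :=
      (hasFDerivAt_id x).sub_const c
    have h3 := h1.clm_apply h2
    have e1 : (fun x => iteratedFDeriv ℝ (i + 1 + 1) f c (fun _ => x - c)) =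
        fun y => (iteratedFDeriv ℝ (i + 1) (fderiv ℝ f) c fun _ => y - c) (y - c) := by
      funext y
      rw [iteratedFDeriv_succ_apply_right]
      rfl
    rw [e1]
    refine h3.congr_fderiv ?_
    ext v
    have key : iteratedFDeriv ℝ i (fderiv ℝ (fderiv ℝ f)) c (fun _ => x - c) v (x - c)
        = iteratedFDeriv ℝ (i + 1) (fderiv ℝ f) c (fun _ => x - c) v := by
      rw [iteratedFDeriv_succ_apply_right]
      let L1 : (E →L[ℝ] E →L[ℝ] F) →L[ℝ] F :=
        (ContinuousLinearMap.apply ℝ F (x - c)).comp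
          (ContinuousLinearMap.apply ℝ (E →L[ℝ] F) v)
      let L2 : (E →L[ℝ] E →L[ℝ] F) →L[ℝ] F :=
        (ContinuousLinearMap.apply ℝ F v).comp
          (ContinuousLinearMap.apply ℝ (E →L[ℝ] F) (x - c))
      have a1 := iteratedFDeriv_clm_eval i L1 _ hddf c (fun _ => x - c)
      have a2 := iteratedFDeriv_clm_eval i L2 _ hddf c (fun _ => x - c)
      have : (fun y => L1 (fderiv ℝ (fderiv ℝ f) y)) =
          fun y => L2 (fderiv ℝ (fderiv ℝ f) y) := by
        funext y
        have hs : IsSymmSndFDerivAt ℝ f y := by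
          refine (hf.contDiffAt (x := y)).isSymmSndFDerivAt ?_
          simp only [minSmoothness_of_isRCLikeNormedField]
          exact_mod_cast Nat.le_add_left 2 i
        exact hs v (x - c)
      rw [this] at a1
      exact a1.symm.trans a2
    simp only [_root_.add_apply, ContinuousLinearMap.comp_apply,
      ContinuousLinearMap.flip_apply, _root_.smul_apply,
      ContinuousLinearMap.id_apply, key]
    push_cast
    module

lemma hasFDerivAt_tay {E : Type} [NormedAddCommGroup E] [NormedSpace ℝ E]
    {F : Type*} [NormedAddCommGroup F] [NormedSpace ℝ F] (k : ℕ) (f : E → F)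
    (hf : ContDiff ℝ (k + 1 : ℕ) f) (c x : E) :
    HasFDerivAt (tay (k + 1) f c) (tay k (fderiv ℝ f) c x) x := by
  have e : tay (k + 1) f c = fun x => (∑ i ∈ Finset.range (k + 1),
      ((Nat.factorial (i + 1) : ℝ)⁻¹) • iteratedFDeriv ℝ (i + 1) f c (fun _ => x - c))
      + f c := by
    funext y
    rw [tay, Finset.sum_range_succ']
    simp
  rw [e]
  refine (HasFDerivAt.fun_sum (A' := fun i => ((Nat.factorial i : ℝ)⁻¹) •
    iteratedFDeriv ℝ i (fderiv ℝ f) c (fun _ => x - c)) ?_).add_const (f c)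
  intro i hi
  have hi' : i + 1 ≤ k + 1 := by simpa [Nat.lt_succ_iff] using hi
  have := (hasFDerivAt_iteratedFDeriv_diag i f
    (hf.of_le (by exact_mod_cast hi')) c x).const_smul ((Nat.factorial (i + 1) : ℝ)⁻¹)
  refine this.congr_fderiv ?_
  rw [smul_smul]
  congr 1
  rw [Nat.factorial_succ]
  have : (Nat.factorial i : ℝ) ≠ 0 := by positivity
  have : (i : ℝ) + 1 ≠ 0 := by positivity
  push_cast
  field_simp

lemma norm_iteratedFDeriv_fderiv_sub {E : Type} [NormedAddCommGroup E] [NormedSpace ℝ E]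
    {F : Type*} [NormedAddCommGroup F] [NormedSpace ℝ F] (k : ℕ) (f : E → F) (x y : E) :
    ‖iteratedFDeriv ℝ k (fderiv ℝ f) x - iteratedFDeriv ℝ k (fderiv ℝ f) y‖ =
      ‖iteratedFDeriv ℝ (k + 1) f x - iteratedFDeriv ℝ (k + 1) f y‖ := by
  rw [iteratedFDeriv_succ_eq_comp_right, iteratedFDeriv_succ_eq_comp_right, comp_apply,
    comp_apply, ← dist_eq_norm, ← dist_eq_norm]
  exact (LinearIsometryEquiv.dist_map _ _ _).symm

/-- Taylor's theorem with Hölder remainder. -/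
lemma norm_sub_tay_le {E : Type} [NormedAddCommGroup E] [NormedSpace ℝ E] {a A : ℝ}
    (ha : 0 < a) (hA : 0 ≤ A) {B : Set E} (hB : Convex ℝ B) {c : E} (hc : c ∈ B) (k : ℕ) :
    ∀ {F : Type*} [NormedAddCommGroup F] [NormedSpace ℝ F] (f : E → F)
    (_ : ContDiff ℝ k f)
    (_ : ∀ x ∈ B, ‖iteratedFDeriv ℝ k f x - iteratedFDeriv ℝ k f c‖ ≤ A * ‖x - c‖ ^ a),
    ∀ x ∈ B, ‖f x - tay k f c x‖ ≤ A * ‖x - c‖ ^ ((k : ℝ) + a) := by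
  induction k with
  | zero =>
    intro F _ _ f hf h x hx
    have := h x hx
    rw [iteratedFDeriv_zero_eq_comp, comp_apply, comp_apply, ← map_sub,
      LinearIsometryEquiv.norm_map] at this
    simpa [tay] using this
  | succ k ih =>
    intro F _ _ f hf h x hx
    have hdf : ContDiff ℝ (k : ℕ) (fderiv ℝ f) := hf.fderiv_right (by norm_cast)
    have h1 := ih (fderiv ℝ f) hdf (fun y hy => by
      rw [norm_iteratedFDeriv_fderiv_sub]; exact h y hy)
    have hd : ∀ y, HasFDerivAt (fun y => f y - tay (k + 1) f c y)
        (fderiv ℝ f y - tay k (fderiv ℝ f) c y) y := fun y =>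
      ((hf.differentiable (by simp)) y).hasFDerivAt.sub (hasFDerivAt_tay k f hf c y)
    have hseg : segment ℝ c x ⊆ B := hB.segment_subset hc hx
    have hbd : ∀ y ∈ segment ℝ c x, ‖fderiv ℝ f y - tay k (fderiv ℝ f) c y‖
        ≤ A * ‖x - c‖ ^ ((k : ℝ) + a) := by
      intro y hy
      refine (h1 y (hseg hy)).trans ?_
      have : ‖y - c‖ ≤ ‖x - c‖ := by
        rw [segment_eq_image'] at hy
        obtain ⟨t, ht, rfl⟩ := hy
        simp only [add_sub_cancel_left, norm_smul, Real.norm_eq_abs, abs_of_nonneg ht.1]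
        exact mul_le_of_le_one_left (norm_nonneg _) ht.2
      gcongr
    have := (convex_segment c x).norm_image_sub_le_of_norm_hasFDerivWithin_le
      (fun y _ => (hd y).hasFDerivWithinAt) hbd (left_mem_segment ℝ c x)
      (right_mem_segment ℝ c x)
    have hz : f c - tay (k + 1) f c c = 0 := by
      simp only [tay, sub_self]
      rw [Finset.sum_range_succ', Finset.sum_eq_zero]
      · simp
      · intro i _
        rw [(iteratedFDeriv ℝ (i + 1) f c).map_coord_zero 0 rfl, smul_zero]
    rw [hz, sub_zero] at this
    refine this.trans_eq ?_
    rcases eq_or_ne (‖x - c‖) 0 with h0 | h0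
    · rw [h0, mul_zero, Real.zero_rpow (by positivity), mul_zero]
    · rw [mul_assoc, ← Real.rpow_add_one h0]
      congr 2
      push_cast
      ring

/-- The difference of two Taylor polynomials, re-expanded about the second centre `c'`: its
coefficients are Taylor remainders of the derivatives of `f`, and inherit their smallness. -/
lemma exists_tay_sub_tay {E : Type} [NormedAddCommGroup E] [NormedSpace ℝ E] {a A : ℝ}
    (ha : 0 < a) (hA : 0 ≤ A) {B : Set E} (hB : Convex ℝ B) {c c' : E} (hc : c ∈ B)
    (hc' : c' ∈ B) (k : ℕ) :
    ∀ {F : Type*} [NormedAddCommGroup F] [NormedSpace ℝ F] (f : E → F)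
    (_ : ContDiff ℝ k f)
    (_ : ∀ x ∈ B, ‖iteratedFDeriv ℝ k f x - iteratedFDeriv ℝ k f c‖ ≤ A * ‖x - c‖ ^ a),
    ∃ M : (i : ℕ) → ContinuousMultilinearMap ℝ (fun _ : Fin i => E) F,
      (∀ i ≤ k, ‖M i‖ ≤ A * ‖c' - c‖ ^ ((k : ℝ) - i + a)) ∧
      ∀ x, tay k f c' x - tay k f c x = ∑ i ∈ Finset.range (k + 1), M i (fun _ => x - c') := by
  induction k with
  | zero =>
    intro F _ _ f hf h
    let N : (i : ℕ) → ContinuousMultilinearMap ℝ (fun _ : Fin i => E) F := fun i =>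
      match i with
      | 0 => ContinuousMultilinearMap.constOfIsEmpty ℝ _ (f c' - f c)
      | _ + 1 => 0
    refine ⟨N, ?_, ?_⟩
    · intro i hi
      obtain rfl : i = 0 := by omega
      have := norm_sub_tay_le ha hA hB hc 0 f hf h c' hc'
      simpa [N, tay] using this
    · intro x
      simp [N, tay]
  | succ k ih =>
    intro F _ _ f hf h
    have hdf : ContDiff ℝ (k : ℕ) (fderiv ℝ f) := hf.fderiv_right (by norm_cast)
    obtain ⟨M, hM, hMe⟩ := ih (fderiv ℝ f) hdf (fun y hy => by
      rw [norm_iteratedFDeriv_fderiv_sub]; exact h y hy)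
    let q0 : F := f c' - tay (k + 1) f c c'
    let N : (i : ℕ) → ContinuousMultilinearMap ℝ (fun _ : Fin i => E) F := fun i =>
      match i with
      | 0 => ContinuousMultilinearMap.constOfIsEmpty ℝ _ q0
      | i + 1 => ((i : ℝ) + 1)⁻¹ • (continuousMultilinearCurryRightEquiv' ℝ i E F).symm (M i)
    refine ⟨N, ?_, ?_⟩
    · intro i hi
      match i with
      | 0 =>
        have := norm_sub_tay_le ha hA hB hc (k + 1) f hf h c' hc'
        simpa [N, q0] using this
      | i + 1 =>
        simp only [N, norm_smul, LinearIsometryEquiv.norm_map]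
        have h1 : ‖((i : ℝ) + 1)⁻¹‖ ≤ 1 := by
          rw [norm_inv, Real.norm_of_nonneg (by positivity)]
          apply inv_le_one_of_one_le₀
          linarith [(Nat.cast_nonneg i : (0 : ℝ) ≤ i)]
        refine (mul_le_of_le_one_left (norm_nonneg _) h1).trans
          ((hM i (by omega)).trans_eq ?_)
        congr 2
        push_cast
        ring
    · -- Along the segment from `c'` to `x` both sides have the same derivative.
      intro x
      let u := x - c'
      let φ : ℝ → F := fun t => tay (k + 1) f c' (c' + t • u) - tay (k + 1) f c (c' + t • u)
        - ∑ i ∈ Finset.range (k + 1), (((i : ℝ) + 1)⁻¹ * t ^ (i + 1)) • M i (fun _ => u) u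
      have hφ : ∀ t, HasDerivAt φ 0 t := by
        intro t
        have hl : HasDerivAt (fun t : ℝ => c' + t • u) u t := by
          simpa using ((hasDerivAt_id t).smul_const u).const_add c'
        have d1 := (hasFDerivAt_tay k f hf c' (c' + t • u)).comp_hasDerivAt t hl
        have d2 := (hasFDerivAt_tay k f hf c (c' + t • u)).comp_hasDerivAt t hl
        have d3 : HasDerivAt (fun t : ℝ => ∑ i ∈ Finset.range (k + 1),
            (((i : ℝ) + 1)⁻¹ * t ^ (i + 1)) • M i (fun _ => u) u)
            (∑ i ∈ Finset.range (k + 1), (t ^ i) • M i (fun _ => u) u) t := by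
          refine HasDerivAt.fun_sum fun i _ => ?_
          have := (((hasDerivAt_pow (i + 1) t).const_mul ((i : ℝ) + 1)⁻¹)).smul_const
            (M i (fun _ => u) u)
          convert this using 2
          have : (i : ℝ) + 1 ≠ 0 := by positivity
          push_cast
          field_simp
        refine ((d1.sub d2).sub d3).congr_deriv ?_
        rw [← _root_.sub_apply, hMe, _root_.sum_apply, sub_eq_zero]
        refine Finset.sum_congr rfl fun i _ => ?_
        have : (fun _ : Fin i => c' + t • u - c') = fun _ => t • u := by
          funext _; simp
        rw [this, (M i).map_smul_univ (fun _ => t) (fun _ => u)]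
        simp
      have hconst : φ 1 = φ 0 :=
        is_const_of_deriv_eq_zero (fun t => (hφ t).differentiableAt)
          (fun t => (hφ t).deriv) 1 0
      have htc : tay (k + 1) f c' c' = f c' := by
        simp only [tay, sub_self]
        rw [Finset.sum_range_succ', Finset.sum_eq_zero]
        · simp
        · intro i _
          rw [(iteratedFDeriv ℝ (i + 1) f c').map_coord_zero 0 rfl, smul_zero]
      simp only [φ, one_smul, zero_smul, add_zero, u, add_sub_cancel, htc, one_pow, mul_one,
        ne_eq, Nat.add_eq_zero_iff, one_ne_zero, and_false, not_false_eq_true, zero_pow, mul_zero,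
        Finset.sum_const_zero, sub_zero] at hconst
      rw [Finset.sum_range_succ', ← sub_eq_iff_eq_add]
      have hN0 : N 0 (fun _ => x - c') = q0 := rfl
      rw [hN0]
      simp only [q0]
      rw [sub_eq_iff_eq_add] at hconst
      rw [hconst, add_sub_cancel_left]
      refine Finset.sum_congr rfl fun i _ => ?_
      rfl

/-! ### Random polynomials -/

/-- A power of a multilinear map on `ℝⁿ`, expanded into coordinate monomials. -/
lemma multilinear_expand {n i : ℕ} {F : Type*} [NormedAddCommGroup F] [NormedSpace ℝ F]
    (M : ContinuousMultilinearMap ℝ (fun _ : Fin i => Fin n → ℝ) F) (u : Fin i → Fin n → ℝ) :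
    M u = ∑ σ : Fin i → Fin n, (∏ l, u l (σ l)) • M (fun l => Pi.single (σ l) (1 : ℝ)) := by
  have h : u = fun l => ∑ j, u l j • (Pi.single j (1 : ℝ) : Fin n → ℝ) := by
    funext l
    exact pi_eq_sum_univ' (u l)
  conv_lhs => rw [h]
  rw [M.map_sum]
  refine Finset.sum_congr rfl fun σ _ => ?_
  rw [M.map_smul_univ (fun l => u l (σ l)) (fun l => Pi.single (σ l) (1 : ℝ))]

lemma norm_multilinear_le_sum {n i : ℕ} {F : Type*} [NormedAddCommGroup F] [NormedSpace ℝ F]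
    (M : ContinuousMultilinearMap ℝ (fun _ : Fin i => Fin n → ℝ) F) :
    ‖M‖ ≤ ∑ σ : Fin i → Fin n, ‖M (fun l => Pi.single (σ l) (1 : ℝ))‖ := by
  refine M.opNorm_le_bound (by positivity) fun u => ?_
  rw [multilinear_expand M u, Finset.sum_mul]
  refine (norm_sum_le _ _).trans (Finset.sum_le_sum fun σ _ => ?_)
  rw [norm_smul, mul_comm, norm_prod]
  gcongr with l
  exact norm_le_pi_norm (u l) (σ l)

lemma norm_multilinear_single_le {n i : ℕ} {F : Type*} [NormedAddCommGroup F] [NormedSpace ℝ F]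
    (M : ContinuousMultilinearMap ℝ (fun _ : Fin i => Fin n → ℝ) F) (σ : Fin i → Fin n) :
    ‖M (fun l => Pi.single (σ l) (1 : ℝ))‖ ≤ ‖M‖ := by
  refine (M.le_opNorm _).trans (mul_le_of_le_one_right (norm_nonneg _) ?_)
  refine Finset.prod_le_one (fun _ _ => norm_nonneg _) fun l _ => ?_
  rw [Pi.norm_single]
  simp

lemma Lp_coeFn_sum {Ω : Type*} {mΩ : MeasurableSpace Ω} {P : Measure Ω} {𝔹 : Type*}
    [NormedAddCommGroup 𝔹] {q : ENNReal} {ι : Type*} (s : Finset ι) (f : ι → Lp 𝔹 q P) :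
    ((∑ i ∈ s, f i : Lp 𝔹 q P) : Ω → 𝔹) =ᵐ[P] fun ω => ∑ i ∈ s, f i ω := by
  classical
  induction s using Finset.induction_on with
  | empty =>
    simp only [Finset.sum_empty]
    exact Lp.coeFn_zero 𝔹 q P
  | insert a s ha ih =>
    rw [Finset.sum_insert ha]
    filter_upwards [Lp.coeFn_add (f a) (∑ i ∈ s, f i), ih] with ω h1 h2
    rw [h1, Pi.add_apply, h2, Finset.sum_insert ha]

section RandomPoly

variable {Ω : Type*} {mΩ : MeasurableSpace Ω} {P : Measure Ω}
  {𝔹 : Type*} [NormedAddCommGroup 𝔹] [NormedSpace ℝ 𝔹] {q : ENNReal} [Fact (1 ≤ q)] {n : ℕ}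

/-- The pathwise realization of the `L^q`-valued polynomial `x ↦ ∑_{i ≤ k} Mᵢ(x - c, …, x - c)`:
expand it into monomials and choose a representative of each of the finitely many coefficients. -/
def polyRep (k : ℕ)
    (M : (i : ℕ) → ContinuousMultilinearMap ℝ (fun _ : Fin i => Fin n → ℝ) (Lp 𝔹 q P))
    (c x : Fin n → ℝ) (ω : Ω) : 𝔹 :=
  ∑ i ∈ Finset.range (k + 1), ∑ σ : Fin i → Fin n,
    (∏ l, (x - c) (σ l)) • (M i (fun l => Pi.single (σ l) (1 : ℝ)) : Lp 𝔹 q P) ω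

/-- A pathwise bound for `polyRep` on the ball of radius `h` about its centre. -/
def polyBd (k : ℕ)
    (M : (i : ℕ) → ContinuousMultilinearMap ℝ (fun _ : Fin i => Fin n → ℝ) (Lp 𝔹 q P))
    (h : ℝ) (ω : Ω) : ℝ :=
  ∑ i ∈ Finset.range (k + 1), ∑ σ : Fin i → Fin n,
    h ^ i * ‖(M i (fun l => Pi.single (σ l) (1 : ℝ)) : Lp 𝔹 q P) ω‖

lemma continuous_polyRep (k : ℕ)
    (M : (i : ℕ) → ContinuousMultilinearMap ℝ (fun _ : Fin i => Fin n → ℝ) (Lp 𝔹 q P))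
    (c : Fin n → ℝ) (ω : Ω) : Continuous fun x => polyRep k M c x ω := by
  unfold polyRep
  simp only [Pi.sub_apply]
  fun_prop

lemma stronglyMeasurable_polyRep (k : ℕ)
    (M : (i : ℕ) → ContinuousMultilinearMap ℝ (fun _ : Fin i => Fin n → ℝ) (Lp 𝔹 q P))
    (c x : Fin n → ℝ) : StronglyMeasurable fun ω => polyRep k M c x ω := by
  unfold polyRep
  exact Finset.stronglyMeasurable_fun_sum _ fun i _ => Finset.stronglyMeasurable_fun_sum _
    fun σ _ => (Lp.stronglyMeasurable _).const_smul _

lemma stronglyMeasurable_polyBd (k : ℕ)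
    (M : (i : ℕ) → ContinuousMultilinearMap ℝ (fun _ : Fin i => Fin n → ℝ) (Lp 𝔹 q P))
    (h : ℝ) : StronglyMeasurable fun ω => polyBd k M h ω := by
  unfold polyBd
  exact Finset.stronglyMeasurable_fun_sum _ fun i _ => Finset.stronglyMeasurable_fun_sum _
    fun σ _ => (Lp.stronglyMeasurable _).norm.const_mul _

lemma polyRep_ae_eq (k : ℕ)
    (M : (i : ℕ) → ContinuousMultilinearMap ℝ (fun _ : Fin i => Fin n → ℝ) (Lp 𝔹 q P))
    (c x : Fin n → ℝ) : (fun ω => polyRep k M c x ω) =ᵐ[P]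
      (∑ i ∈ Finset.range (k + 1), M i (fun _ => x - c) : Lp 𝔹 q P) := by
  have e : (∑ i ∈ Finset.range (k + 1), M i (fun _ => x - c) : Lp 𝔹 q P) =
      ∑ s ∈ (Finset.range (k + 1)).sigma (fun i => (Finset.univ : Finset (Fin i → Fin n))),
        (∏ l, (x - c) (s.2 l)) • M s.1 (fun l => Pi.single (s.2 l) (1 : ℝ)) := by
    rw [Finset.sum_sigma]
    exact Finset.sum_congr rfl fun i _ => multilinear_expand (M i) _
  rw [e]
  have h1 := Lp_coeFn_sum (P := P) (q := q)
    ((Finset.range (k + 1)).sigma (fun i => (Finset.univ : Finset (Fin i → Fin n))))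
    (fun s => (∏ l, (x - c) (s.2 l)) • M s.1 (fun l => Pi.single (s.2 l) (1 : ℝ)))
  have h2 : ∀ᵐ ω ∂P, ∀ s : (i : ℕ) × (Fin i → Fin n),
      ((∏ l, (x - c) (s.2 l)) • M s.1 (fun l => Pi.single (s.2 l) (1 : ℝ)) : Lp 𝔹 q P) ω
      = (∏ l, (x - c) (s.2 l)) • (M s.1 (fun l => Pi.single (s.2 l) (1 : ℝ)) : Lp 𝔹 q P) ω :=
    ae_all_iff.2 fun s => Lp.coeFn_smul _ _
  filter_upwards [h1, h2] with ω h1 h2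
  rw [h1, polyRep, Finset.sum_congr rfl fun s _ => h2 s, Finset.sum_sigma]

lemma polyRep_le_polyBd (k : ℕ)
    (M : (i : ℕ) → ContinuousMultilinearMap ℝ (fun _ : Fin i => Fin n → ℝ) (Lp 𝔹 q P))
    {c x : Fin n → ℝ} {h : ℝ} (hx : ‖x - c‖ ≤ h) (ω : Ω) :
    ‖polyRep k M c x ω‖ ≤ polyBd k M h ω := by
  refine (norm_sum_le _ _).trans (Finset.sum_le_sum fun i _ => ?_)
  refine (norm_sum_le _ _).trans (Finset.sum_le_sum fun σ _ => ?_)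
  rw [norm_smul, norm_prod]
  gcongr
  calc ∏ l, ‖(x - c) (σ l)‖ ≤ ∏ _l : Fin i, h :=
        Finset.prod_le_prod (fun _ _ => norm_nonneg _)
          fun l _ => (norm_le_pi_norm (x - c) (σ l)).trans hx
    _ = h ^ i := by simp

lemma eLpNorm_polyBd_le (k : ℕ)
    (M : (i : ℕ) → ContinuousMultilinearMap ℝ (fun _ : Fin i => Fin n → ℝ) (Lp 𝔹 q P))
    {h β : ℝ} (hh : 0 ≤ h) (hM : ∀ i ≤ k, ‖M i‖ * h ^ i ≤ β) :
    eLpNorm (fun ω => polyBd k M h ω) q P ≤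
      ENNReal.ofReal ((∑ i ∈ Finset.range (k + 1), (n : ℝ) ^ i) * β) := by
  have hq : (1 : ENNReal) ≤ q := Fact.out
  have hβ : 0 ≤ β := le_trans (by positivity) (hM 0 (Nat.zero_le k))
  have e : (fun ω => polyBd k M h ω) = ∑ i ∈ Finset.range (k + 1), ∑ σ : Fin i → Fin n,
      fun ω => h ^ i * ‖(M i (fun l => Pi.single (σ l) (1 : ℝ)) : Lp 𝔹 q P) ω‖ := by
    funext ω
    simp [polyBd]
  have hm : ∀ (i : ℕ) (σ : Fin i → Fin n), AEStronglyMeasurable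
      (fun ω => h ^ i * ‖(M i (fun l => Pi.single (σ l) (1 : ℝ)) : Lp 𝔹 q P) ω‖) P :=
    fun i σ => ((Lp.stronglyMeasurable _).norm.const_mul _).aestronglyMeasurable
  rw [e, Finset.sum_mul, ENNReal.ofReal_sum_of_nonneg (fun i _ => by positivity)]
  refine (eLpNorm_sum_le (fun i _ => Finset.aestronglyMeasurable_sum _ fun σ _ => hm i σ)
    hq).trans (Finset.sum_le_sum fun i hi => ?_)
  refine (eLpNorm_sum_le (fun σ _ => hm i σ) hq).trans ?_
  have hb : ∀ σ ∈ (Finset.univ : Finset (Fin i → Fin n)), eLpNorm (fun ω => h ^ i *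
      ‖(M i (fun l => Pi.single (σ l) (1 : ℝ)) : Lp 𝔹 q P) ω‖) q P ≤ ENNReal.ofReal β := by
    intro σ _
    have h1 : (fun ω => h ^ i * ‖(M i (fun l => Pi.single (σ l) (1 : ℝ)) : Lp 𝔹 q P) ω‖) =
        (h ^ i) • fun ω => ‖(M i (fun l => Pi.single (σ l) (1 : ℝ)) : Lp 𝔹 q P) ω‖ := rfl
    rw [h1, eLpNorm_const_smul, eLpNorm_norm, ← Lp.enorm_def, ← ofReal_norm, ← ofReal_norm,
      ← ENNReal.ofReal_mul (norm_nonneg _)]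
    apply ENNReal.ofReal_le_ofReal
    refine le_trans ?_ (hM i (by simpa [Nat.lt_succ_iff] using hi))
    rw [Real.norm_of_nonneg (by positivity), mul_comm]
    gcongr
    exact norm_multilinear_single_le _ _
  refine (Finset.sum_le_card_nsmul _ _ _ hb).trans ?_
  rw [nsmul_eq_mul, ENNReal.ofReal_mul (by positivity)]
  gcongr
  simp [ENNReal.ofReal_pow]

end RandomPoly

/-! ### Measure-theoretic tools -/

/-- Minkowski's inequality for countable sums of nonnegative functions. -/
lemma eLpNorm_tsum_le_tsum {Ω : Type*} {mΩ : MeasurableSpace Ω} {P : Measure Ω} {q : ENNReal}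
    (hq : 1 ≤ q) (hq' : q ≠ ⊤) (D : ℕ → Ω → ENNReal) (hD : ∀ m, Measurable (D m)) :
    eLpNorm (fun ω => ∑' m, D m ω) q P ≤ ∑' m, eLpNorm (D m) q P := by
  have hq0 : q ≠ 0 := (zero_lt_one.trans_le hq).ne'
  have hr : 0 < q.toReal := ENNReal.toReal_pos hq0 hq'
  have hfin : ∀ N, ∫⁻ ω, (∑ m ∈ Finset.range N, D m ω) ^ q.toReal ∂P ≤
      (∑' m, eLpNorm (D m) q P) ^ q.toReal := by
    intro N
    have h1 := eLpNorm_sum_le (μ := P) (s := Finset.range N) (f := D)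
      (fun m _ => (hD m).aestronglyMeasurable) hq
    have h2 := h1.trans (ENNReal.sum_le_tsum (Finset.range N))
    rw [eLpNorm_eq_lintegral_rpow_enorm_toReal hq0 hq'] at h2
    rw [one_div, ENNReal.rpow_inv_le_iff hr] at h2
    simpa using h2
  rw [eLpNorm_eq_lintegral_rpow_enorm_toReal hq0 hq', one_div, ENNReal.rpow_inv_le_iff hr]
  have hsup : ∀ ω, ‖∑' m, D m ω‖ₑ ^ q.toReal =
      ⨆ N, (∑ m ∈ Finset.range N, D m ω) ^ q.toReal := by
    intro ω
    rw [enorm_eq_self, ENNReal.tsum_eq_iSup_nat]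
    exact (ENNReal.orderIsoRpow q.toReal hr).map_iSup _
  simp_rw [hsup]
  rw [lintegral_iSup]
  · exact iSup_le hfin
  · intro N
    exact (Finset.measurable_fun_sum _ fun m _ => hD m).pow_const _
  · intro N N' hN ω
    dsimp only
    gcongr

/-- The maximum of finitely many functions is at most the `q`-th root of the sum of their `q`-th
powers, which costs the `q`-th root of their number in `L^q`. -/
lemma exists_max_bd {Ω : Type*} {mΩ : MeasurableSpace Ω} {P : Measure Ω} {q : ENNReal}
    (hq : q ≠ 0) (hq' : q ≠ ⊤) {ι : Type*} (S : Finset ι) (V : ι → Ω → ENNReal) (hV : ∀ s, Measurable (V s)) {β : ENNReal}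
    (hβ : ∀ s ∈ S, eLpNorm (V s) q P ≤ β) :
    ∃ D : Ω → ENNReal, Measurable D ∧ (∀ s ∈ S, ∀ ω, V s ω ≤ D ω) ∧
      eLpNorm D q P ≤ (S.card : ENNReal) ^ (1 / q.toReal) * β := by
  have hr : 0 < q.toReal := ENNReal.toReal_pos hq hq'
  refine ⟨fun ω => (∑ s ∈ S, V s ω ^ q.toReal) ^ (1 / q.toReal),
    (Finset.measurable_fun_sum _ fun s _ => (hV s).pow_const _).pow_const _, ?_, ?_⟩
  · intro s hs ω
    rw [one_div, ENNReal.le_rpow_inv_iff hr]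
    exact Finset.single_le_sum (f := fun s => V s ω ^ q.toReal) (fun _ _ => zero_le) hs
  · rw [eLpNorm_eq_lintegral_rpow_enorm_toReal hq hq', one_div, ENNReal.rpow_inv_le_iff hr,
      ENNReal.mul_rpow_of_nonneg _ _ hr.le, ENNReal.rpow_inv_rpow hr.ne']
    simp only [enorm_eq_self, ENNReal.rpow_inv_rpow hr.ne']
    rw [lintegral_finsetSum _ fun s _ => (hV s).pow_const _, ← nsmul_eq_mul]
    refine Finset.sum_le_card_nsmul _ _ _ fun s hs => ?_
    have := hβ s hs
    rw [eLpNorm_eq_lintegral_rpow_enorm_toReal hq hq', one_div,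
      ENNReal.rpow_inv_le_iff hr] at this
    simpa using this

lemma ae_ne_top_of_eLpNorm {Ω : Type*} {mΩ : MeasurableSpace Ω} {P : Measure Ω} {q : ENNReal}
    (hq : q ≠ 0) (hq' : q ≠ ⊤) {f : Ω → ENNReal} (hf : Measurable f)
    (h : eLpNorm f q P ≠ ⊤) : ∀ᵐ ω ∂P, f ω ≠ ⊤ := by
  have hr : 0 < q.toReal := ENNReal.toReal_pos hq hq'
  rw [eLpNorm_eq_lintegral_rpow_enorm_toReal hq hq'] at h
  have h1 : ∫⁻ ω, f ω ^ q.toReal ∂P ≠ ⊤ := by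
    intro h2
    apply h
    simp only [enorm_eq_self]
    rw [h2, ENNReal.top_rpow_of_pos (by positivity)]
  filter_upwards [ae_lt_top (hf.pow_const _) h1] with ω hω h2
  rw [h2, ENNReal.top_rpow_of_pos hr] at hω
  exact lt_irrefl _ hω

/-- A pointwise almost sure limit of representatives agrees with the limit in `L^q`. -/
lemma ae_eq_of_tendsto_Lp {Ω : Type*} {mΩ : MeasurableSpace Ω} {P : Measure Ω}
    [IsFiniteMeasure P] {𝔹 : Type*} [NormedAddCommGroup 𝔹] {q : ENNReal} [Fact (1 ≤ q)]
    {f : ℕ → Lp 𝔹 q P} {g : Lp 𝔹 q P} (hfg : Tendsto f atTop (nhds g)) {u : ℕ → Ω → 𝔹}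
    (hu : ∀ m, u m =ᵐ[P] f m) {v : Ω → 𝔹}
    (huv : ∀ᵐ ω ∂P, Tendsto (fun m => u m ω) atTop (nhds (v ω))) : v =ᵐ[P] g := by
  have h1 := tendstoInMeasure_of_tendsto_Lp hfg
  have h2 : TendstoInMeasure P (fun m => (f m : Ω → 𝔹)) atTop v := by
    refine tendstoInMeasure_of_tendsto_ae (fun m => Lp.aestronglyMeasurable _) ?_
    filter_upwards [huv, ae_all_iff.2 hu] with ω h h'
    simpa only [h'] using h
  exact tendstoInMeasure_ae_unique h2 h1

/-- Two families of continuous paths that agree almost surely at each point are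
indistinguishable. -/
lemma indistinguishable {Ω : Type*} {mΩ : MeasurableSpace Ω} {P : Measure Ω}
    {S : Type*} [TopologicalSpace S] [TopologicalSpace.SeparableSpace S]
    {G : Type*} [TopologicalSpace G] [T2Space G] {u v : S → Ω → G}
    (hu : ∀ᵐ ω ∂P, Continuous fun s => u s ω) (hv : ∀ᵐ ω ∂P, Continuous fun s => v s ω)
    (huv : ∀ s, u s =ᵐ[P] v s) : ∀ᵐ ω ∂P, ∀ s, u s ω = v s ω := by
  obtain ⟨t, ht, htd⟩ := TopologicalSpace.exists_countable_dense S
  have := (ae_ball_iff ht).2 fun s _ => huv s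
  filter_upwards [hu, hv, this] with ω h1 h2 h3 s
  exact congrFun (Continuous.ext_on htd h1 h2 h3) s

/-! ### Dyadic grids -/

/-- The point with integer coordinates `z` of the grid of mesh `R / 2 ^ m` centred at `x₀`. -/
def gp {n : ℕ} (x₀ : Fin n → ℝ) (R : ℝ) (m : ℕ) (z : Fin n → ℤ) : Fin n → ℝ :=
  fun i => x₀ i + R / 2 ^ m * z i

/-- The coordinates of the lower corner of the cell of the `m`-th grid that contains `x`. -/
def fl {n : ℕ} (x₀ : Fin n → ℝ) (R : ℝ) (m : ℕ) (x : Fin n → ℝ) : Fin n → ℤ :=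
  fun i => ⌊(x i - x₀ i) * 2 ^ m / R⌋

section Grid

variable {n : ℕ} {x₀ : Fin n → ℝ} {R : ℝ}

lemma gp_succ_two_mul (m : ℕ) (z : Fin n → ℤ) :
    gp x₀ R (m + 1) (fun i => 2 * z i) = gp x₀ R m z := by
  funext i
  simp only [gp]
  push_cast
  rw [pow_succ]
  field_simp

lemma norm_sub_gp_fl_le (hR : 0 < R) (m : ℕ) (x : Fin n → ℝ) :
    ‖x - gp x₀ R m (fl x₀ R m x)‖ ≤ R / 2 ^ m := by
  rw [pi_norm_le_iff_of_nonneg (by positivity)]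
  intro i
  have h1 := Int.floor_le ((x i - x₀ i) * 2 ^ m / R)
  have h2 := Int.lt_floor_add_one ((x i - x₀ i) * 2 ^ m / R)
  have hp : (0 : ℝ) < R / 2 ^ m := by positivity
  have e : x i - gp x₀ R m (fl x₀ R m x) i =
      R / 2 ^ m * ((x i - x₀ i) * 2 ^ m / R - ⌊(x i - x₀ i) * 2 ^ m / R⌋) := by
    simp only [gp, fl]
    field_simp
    ring
  rw [Pi.sub_apply, e, norm_mul, Real.norm_of_nonneg hp.le]
  apply mul_le_of_le_one_right hp.le
  rw [Real.norm_eq_abs, abs_le]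
  constructor <;> linarith

lemma gp_mem_iff (hR : 0 < R) (r m : ℕ) (z : Fin n → ℤ) :
    gp x₀ R m z ∈ closedBall x₀ (r * R) ↔ ∀ i, |z i| ≤ r * 2 ^ m := by
  rw [mem_closedBall, dist_eq_norm, pi_norm_le_iff_of_nonneg (by positivity)]
  refine forall_congr' fun i => ?_
  have hp : (0 : ℝ) < R / 2 ^ m := by positivity
  have e : (gp x₀ R m z - x₀) i = R / 2 ^ m * z i := by simp [gp]
  have e2 : (r : ℝ) * R = R / 2 ^ m * (r * 2 ^ m) := by field_simp
  rw [e, norm_mul, Real.norm_of_nonneg hp.le, e2, mul_le_mul_iff_right₀ hp, Real.norm_eq_abs]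
  exact_mod_cast Iff.rfl

lemma gp_fl_mem (hR : 0 < R) (r m : ℕ) {x : Fin n → ℝ} (hx : x ∈ closedBall x₀ (r * R)) :
    gp x₀ R m (fl x₀ R m x) ∈ closedBall x₀ (r * R) := by
  rw [gp_mem_iff hR]
  intro i
  rw [mem_closedBall, dist_eq_norm, pi_norm_le_iff_of_nonneg (by positivity)] at hx
  have h := hx i
  rw [Pi.sub_apply, Real.norm_eq_abs, abs_le] at h
  have e2 : (r : ℝ) * 2 ^ m = (r * R) * 2 ^ m / R := by field_simp
  rw [abs_le]
  constructor
  · simp only [fl]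
    rw [Int.le_floor]
    push_cast
    rw [e2, ← neg_div, ← neg_mul]
    gcongr
    exact h.1
  · have : ((fl x₀ R m x i : ℤ) : ℝ) ≤ r * 2 ^ m := by
      refine (Int.floor_le _).trans ?_
      rw [e2]
      gcongr
      exact h.2
    exact_mod_cast this

lemma abs_two_mul_fl_sub_le (m : ℕ) (x : Fin n → ℝ) (i : Fin n) :
    |2 * fl x₀ R m x i - fl x₀ R (m + 1) x i| ≤ 2 := by
  simp only [fl]
  have e : (x i - x₀ i) * 2 ^ (m + 1) / R = 2 * ((x i - x₀ i) * 2 ^ m / R) := by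
    rw [pow_succ]; ring
  rw [e]
  set t := (x i - x₀ i) * 2 ^ m / R
  have h1 := Int.floor_le t
  have h2 := Int.lt_floor_add_one t
  have h3 := Int.floor_le (2 * t)
  have h4 := Int.lt_floor_add_one (2 * t)
  have h5 : ((2 * ⌊t⌋ - ⌊2 * t⌋ : ℤ) : ℝ) < 1 := by push_cast; linarith
  have h6 : (-2 : ℝ) < ((2 * ⌊t⌋ - ⌊2 * t⌋ : ℤ) : ℝ) := by push_cast; linarith
  have h7 : 2 * ⌊t⌋ - ⌊2 * t⌋ < 1 := by exact_mod_cast h5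
  have h8 : -2 < 2 * ⌊t⌋ - ⌊2 * t⌋ := by exact_mod_cast h6
  rw [abs_le]
  constructor <;> omega

lemma abs_fl_sub_fl_le (hR : 0 < R) (m : ℕ) {x y : Fin n → ℝ} (h : ‖x - y‖ < R / 2 ^ m)
    (i : Fin n) : |fl x₀ R m x i - fl x₀ R m y i| ≤ 1 := by
  have h0 : |x i - y i| < R / 2 ^ m := (norm_le_pi_norm (x - y) i).trans_lt h
  have e : (x i - x₀ i) * 2 ^ m / R - (y i - x₀ i) * 2 ^ m / R =
      (x i - y i) / (R / 2 ^ m) := by field_simp; ring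
  have h1 : |(x i - x₀ i) * 2 ^ m / R - (y i - x₀ i) * 2 ^ m / R| < 1 := by
    rw [e, abs_div, abs_of_pos (show (0 : ℝ) < R / 2 ^ m by positivity), div_lt_one (by positivity)]
    exact h0
  simp only [fl]
  set t := (x i - x₀ i) * 2 ^ m / R
  set s := (y i - x₀ i) * 2 ^ m / R
  rw [abs_lt] at h1
  have h2 := Int.floor_le t
  have h3 := Int.lt_floor_add_one t
  have h4 := Int.floor_le s
  have h5 := Int.lt_floor_add_one s
  have h6 : ((⌊t⌋ - ⌊s⌋ : ℤ) : ℝ) < 2 := by push_cast; linarith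
  have h7 : (-2 : ℝ) < ((⌊t⌋ - ⌊s⌋ : ℤ) : ℝ) := by push_cast; linarith
  have h8 : ⌊t⌋ - ⌊s⌋ < 2 := by exact_mod_cast h6
  have h9 : -2 < ⌊t⌋ - ⌊s⌋ := by exact_mod_cast h7
  rw [abs_le]
  constructor <;> omega

lemma norm_gp_sub_gp_le (hR : 0 < R) (m : ℕ) {z z' : Fin n → ℤ}
    (h : ∀ i, |2 * z i - z' i| ≤ 2) :
    ‖gp x₀ R (m + 1) z' - gp x₀ R m z‖ ≤ R / 2 ^ m := by
  rw [pi_norm_le_iff_of_nonneg (by positivity)]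
  intro i
  have hi : |2 * (z i : ℝ) - z' i| ≤ 2 := by exact_mod_cast h i
  have e : gp x₀ R (m + 1) z' i - gp x₀ R m z i = R / 2 ^ m / 2 * -(2 * (z i : ℝ) - z' i) := by
    simp only [gp]
    rw [pow_succ]
    field_simp
    ring
  have hp : (0 : ℝ) < R / 2 ^ m / 2 := by positivity
  rw [Pi.sub_apply, e, norm_mul, Real.norm_of_nonneg hp.le, norm_neg, Real.norm_eq_abs]
  nlinarith

end Grid

/-- `D m` bounds the difference between the local approximations `T c` and `T c'` (near `c'`),
for all pairs of neighbouring points `c`, `c'` of the grids of level `m` and `m + 1` that lie in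
the ball of radius `r * R`. -/
def GridBd {n : ℕ} {𝔹 : Type*} [NormedAddCommGroup 𝔹] (x₀ : Fin n → ℝ) (R : ℝ) (r : ℕ)
    (T : (Fin n → ℝ) → (Fin n → ℝ) → 𝔹) (D : ℕ → ENNReal) : Prop :=
  ∀ (m : ℕ) (z z' : Fin n → ℤ), gp x₀ R m z ∈ closedBall x₀ (r * R) →
    gp x₀ R (m + 1) z' ∈ closedBall x₀ (r * R) → (∀ i, |2 * z i - z' i| ≤ 2) →
    ∀ x, ‖x - gp x₀ R (m + 1) z'‖ ≤ 2 * (R / 2 ^ m) →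
      ‖T (gp x₀ R (m + 1) z') x - T (gp x₀ R m z) x‖ₑ ≤ D m

section Pathwise

variable {n : ℕ} {𝔹 : Type*} [NormedAddCommGroup 𝔹] {x₀ : Fin n → ℝ} {R : ℝ}
  {T : (Fin n → ℝ) → (Fin n → ℝ) → 𝔹}

lemma GridBd.step (hR : 0 < R) {r : ℕ} {D : ℕ → ENNReal} (hD : GridBd x₀ R r T D) (m : ℕ)
    {x : Fin n → ℝ} (hx : x ∈ closedBall x₀ (r * R)) :
    ‖T (gp x₀ R (m + 1) (fl x₀ R (m + 1) x)) x - T (gp x₀ R m (fl x₀ R m x)) x‖ₑ ≤ D m := by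
  refine hD m _ _ (gp_fl_mem hR r m hx) (gp_fl_mem hR r (m + 1) hx)
    (abs_two_mul_fl_sub_le m x) x ((norm_sub_gp_fl_le hR (m + 1) x).trans ?_)
  have h1 : R / 2 ^ (m + 1) ≤ R / 2 ^ m := by
    gcongr
    · norm_num
    · omega
  have h2 : 0 < R / 2 ^ m := by positivity
  linarith

lemma dist_le_toReal {D : ENNReal} (hD : D ≠ ⊤) {u v : 𝔹} (h : ‖u - v‖ₑ ≤ D) :
    dist v u ≤ D.toReal := by
  rw [dist_comm, dist_eq_norm, ← toReal_enorm]
  exact ENNReal.toReal_mono hD h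

/-- Local approximations with summable discrepancies converge to a continuous function. The
approximation of level `m` jumps across the faces of the cells, but near a given point its jumps
are at most `D m`. -/
lemma exists_continuous_limit [CompleteSpace 𝔹] (hR : 0 < R) (hT : ∀ c, Continuous (T c))
    (h : ∀ r : ℕ, ∃ D : ℕ → ENNReal, GridBd x₀ R r T D ∧ ∑' m, D m ≠ ⊤) :
    ∃ f : (Fin n → ℝ) → 𝔹, Continuous f ∧
      ∀ x, Tendsto (fun m => T (gp x₀ R m (fl x₀ R m x)) x) atTop (nhds (f x)) := by
  have hcov : ∀ x : Fin n → ℝ, ∃ r : ℕ, x ∈ ball x₀ (r * R) := by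
    intro x
    obtain ⟨r, hr⟩ := exists_nat_gt (dist x x₀ / R)
    exact ⟨r, by rwa [mem_ball, ← div_lt_iff₀ hR]⟩
  have hconv : ∀ x, ∃ y, Tendsto (fun m => T (gp x₀ R m (fl x₀ R m x)) x) atTop (nhds y) := by
    intro x
    obtain ⟨r, hr⟩ := hcov x
    obtain ⟨D, hD, hs⟩ := h r
    have hDm : ∀ m, D m ≠ ⊤ := fun m => ENNReal.ne_top_of_tsum_ne_top hs m
    apply cauchySeq_tendsto_of_complete
    refine cauchySeq_of_dist_le_of_summable (fun m => (D m).toReal) (fun m => ?_)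
      (ENNReal.summable_toReal hs)
    exact dist_le_toReal (hDm m) (hD.step hR m (ball_subset_closedBall hr))
  choose f hf using hconv
  refine ⟨f, ?_, hf⟩
  rw [continuous_iff_continuousAt]
  intro x
  obtain ⟨r, hr⟩ := hcov x
  obtain ⟨D, hD, hs⟩ := h r
  have hDm : ∀ m, D m ≠ ⊤ := fun m => ENNReal.ne_top_of_tsum_ne_top hs m
  have hsum := ENNReal.summable_toReal hs
  have htail : ∀ y ∈ closedBall x₀ (r * R), ∀ m,
      dist (T (gp x₀ R m (fl x₀ R m y)) y) (f y) ≤ ∑' l, (D (l + m)).toReal := by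
    intro y hy m
    have := dist_le_tsum_of_dist_le_of_tendsto (fun m => (D m).toReal)
      (fun m => dist_le_toReal (hDm m) (hD.step hR m hy)) hsum (hf y) m
    simpa only [add_comm] using this
  rw [Metric.continuousAt_iff']
  intro ε hε
  have ht1 : ∀ᶠ m in atTop, ∑' l, (D (l + m)).toReal < ε / 4 :=
    (tendsto_sum_nat_add fun m => (D m).toReal).eventually_lt_const (by positivity)
  have ht2 : ∀ᶠ m in atTop, (D m).toReal < ε / 4 :=
    hsum.tendsto_atTop_zero.eventually_lt_const (by positivity)
  obtain ⟨m, hm1, hm2⟩ := (ht1.and ht2).exists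
  set c := gp x₀ R m (fl x₀ R m x) with hc
  have e1 : ∀ᶠ y in nhds x, y ∈ ball x₀ (r * R) := isOpen_ball.mem_nhds hr
  have e2 : ∀ᶠ y in nhds x, y ∈ ball x (R / 2 ^ m) :=
    isOpen_ball.mem_nhds (mem_ball_self (by positivity))
  have e3 : ∀ᶠ y in nhds x, dist (T c y) (T c x) < ε / 4 :=
    Metric.continuousAt_iff'.1 (hT c).continuousAt _ (by positivity)
  filter_upwards [e1, e2, e3] with y h1 h2 h3
  have hxy : ‖y - x‖ < R / 2 ^ m := by rwa [mem_ball, dist_eq_norm] at h2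
  have hyb := ball_subset_closedBall h1
  have hxb := ball_subset_closedBall hr
  -- The centre `c` is also a point of the finer grid, hence comparable with the centre for `y`.
  have hj : dist (T (gp x₀ R m (fl x₀ R m y)) y) (T c y) ≤ (D m).toReal := by
    have hc' : c = gp x₀ R (m + 1) (fun i => 2 * fl x₀ R m x i) := (gp_succ_two_mul m _).symm
    refine dist_le_toReal (hDm m) ?_
    rw [hc']
    refine hD m _ _ (gp_fl_mem hR r m hyb) ?_ (fun i => ?_) y ?_
    · rw [← hc']; exact gp_fl_mem hR r m hxb
    · have := abs_fl_sub_fl_le (x₀ := x₀) hR m hxy i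
      rw [abs_le] at this ⊢
      omega
    · rw [← hc']
      have h4 := norm_sub_gp_fl_le (x₀ := x₀) hR m x
      calc ‖y - c‖ = ‖(y - x) + (x - c)‖ := by congr 1; abel
        _ ≤ ‖y - x‖ + ‖x - c‖ := norm_add_le _ _
        _ ≤ 2 * (R / 2 ^ m) := by linarith
  have a1 := htail y hyb m
  have a2 := htail x hxb m
  have t1 := dist_triangle (f y) (T (gp x₀ R m (fl x₀ R m y)) y) (f x)
  have t2 := dist_triangle (T (gp x₀ R m (fl x₀ R m y)) y) (T c y) (f x)
  have t3 := dist_triangle (T c y) (T c x) (f x)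
  rw [dist_comm] at a1
  linarith

/-- On the ball of radius `R` about `x₀`, the limit differs from the approximation centred at `x₀` by at
most the total discrepancy. -/
lemma GridBd.limit_bound (hR : 0 < R) {D : ℕ → ENNReal} (hD : GridBd x₀ R 1 T D)
    {x : Fin n → ℝ} (hx : x ∈ closedBall x₀ R) {y : 𝔹}
    (hy : Tendsto (fun m => T (gp x₀ R m (fl x₀ R m x)) x) atTop (nhds y)) :
    ‖y‖ₑ ≤ ‖T x₀ x‖ₑ + ∑' m, D m := by
  have hx' : x ∈ closedBall x₀ ((1 : ℕ) * R) := by simpa using hx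
  have hm : ∀ m, ‖T (gp x₀ R (m + 1) (fl x₀ R (m + 1) x)) x‖ₑ ≤
      ‖T x₀ x‖ₑ + ∑ l ∈ Finset.range (m + 1), D l := by
    intro m
    induction m with
    | zero =>
      -- `x₀` is itself a neighbour of every point of level `1` in the ball.
      have e0 : gp x₀ R 0 0 = x₀ := by funext i; simp [gp]
      have hmem := gp_fl_mem hR 1 1 hx'
      have h0 := hD 0 0 (fl x₀ R 1 x) (by rw [e0]; simp; positivity) hmem (fun i => by
        have := (gp_mem_iff hR 1 1 _).1 hmem i
        simpa using this) x ((norm_sub_gp_fl_le hR 1 x).trans (by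
          norm_num; linarith))
      rw [e0] at h0
      simp only [zero_add, Finset.range_one, Finset.sum_singleton]
      calc ‖T (gp x₀ R 1 (fl x₀ R 1 x)) x‖ₑ
          = ‖T x₀ x + (T (gp x₀ R 1 (fl x₀ R 1 x)) x - T x₀ x)‖ₑ := by congr 1; abel
        _ ≤ _ := (enorm_add_le _ _).trans (by gcongr)
    | succ m ih =>
      have hs := hD.step hR (m + 1) hx'
      rw [Finset.sum_range_succ, ← add_assoc]
      calc ‖T (gp x₀ R (m + 1 + 1) (fl x₀ R (m + 1 + 1) x)) x‖ₑ
          = ‖T (gp x₀ R (m + 1) (fl x₀ R (m + 1) x)) x +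
            (T (gp x₀ R (m + 1 + 1) (fl x₀ R (m + 1 + 1) x)) x
              - T (gp x₀ R (m + 1) (fl x₀ R (m + 1) x)) x)‖ₑ := by congr 1; abel
        _ ≤ _ := (enorm_add_le _ _).trans (add_le_add ih hs)
  refine le_of_tendsto ((continuous_enorm.tendsto y).comp ((tendsto_add_atTop_iff_nat 1).2 hy))
    (Eventually.of_forall fun m => (hm m).trans ?_)
  gcongr
  exact ENNReal.sum_le_tsum _

end Pathwise

/-! ### Continuous versions of Hölder-differentiable maps into `L^q` -/

/-- `A` bounds the `C^{k,a}` norm of `X` on `B`: it bounds the derivatives of order at most `k`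
and the `a`-Hölder seminorm of the `k`-th derivative. -/
structure HolderBd {n : ℕ} {F : Type*} [NormedAddCommGroup F] [NormedSpace ℝ F]
    (k : ℕ) (a : ℝ) (B : Set (Fin n → ℝ)) (X : (Fin n → ℝ) → F) (A : ℝ) : Prop where
  bd : ∀ i ≤ k, ∀ x ∈ B, ‖iteratedFDeriv ℝ i X x‖ ≤ A
  holder : ∀ x ∈ B, ∀ y ∈ B,
    ‖iteratedFDeriv ℝ k X x - iteratedFDeriv ℝ k X y‖ ≤ A * ‖x - y‖ ^ a

/-- `X` is of class `C^{k,a}`, with a locally Hölder continuous `k`-th derivative. -/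
structure LocHolder {n : ℕ} {F : Type*} [NormedAddCommGroup F] [NormedSpace ℝ F]
    (k : ℕ) (a : ℝ) (X : (Fin n → ℝ) → F) : Prop where
  contDiff : ContDiff ℝ k X
  bd : ∀ (c : Fin n → ℝ) (R : ℝ), ∃ A, 0 ≤ A ∧ HolderBd k a (closedBall c R) X A

section Core

variable {Ω : Type*} {mΩ : MeasurableSpace Ω} {P : Measure Ω}
  {𝔹 : Type*} [NormedAddCommGroup 𝔹] [NormedSpace ℝ 𝔹] {q : ENNReal} [Fact (1 ≤ q)] {n : ℕ}

/-- The coefficients of the Taylor expansion of `X` at `c`. -/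
def tayCoef (X : (Fin n → ℝ) → Lp 𝔹 q P) (c : Fin n → ℝ) (i : ℕ) :
    ContinuousMultilinearMap ℝ (fun _ : Fin i => Fin n → ℝ) (Lp 𝔹 q P) :=
  ((Nat.factorial i : ℝ)⁻¹) • iteratedFDeriv ℝ i X c

/-- A pathwise realization of the Taylor polynomial of `X` at `c`. -/
def tayRep (k : ℕ) (X : (Fin n → ℝ) → Lp 𝔹 q P) (c x : Fin n → ℝ) (ω : Ω) : 𝔹 :=
  polyRep k (tayCoef X c) c x ω

lemma tayRep_ae_eq (k : ℕ) (X : (Fin n → ℝ) → Lp 𝔹 q P) (c x : Fin n → ℝ) :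
    (fun ω => tayRep k X c x ω) =ᵐ[P] (tay k X c x : Lp 𝔹 q P) :=
  polyRep_ae_eq k (tayCoef X c) c x

/-- The discrepancy of two Taylor polynomials at distance at most `h`, uniformly over a ball of
radius `h`, is controlled in `L^q` with a gain of `k + a` powers of `h`. -/
lemma exists_pair_bd {a A h : ℝ} (ha : 0 < a) (hA : 0 ≤ A) {B : Set (Fin n → ℝ)}
    (hB : Convex ℝ B) {c c' : Fin n → ℝ} (hc : c ∈ B) (hc' : c' ∈ B) (k : ℕ)
    {X : (Fin n → ℝ) → Lp 𝔹 q P} (hX : ContDiff ℝ k X) (hH : HolderBd k a B X A)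
    (hh : 0 < h) (hcc : ‖c' - c‖ ≤ h) :
    ∃ V : Ω → ENNReal, Measurable V ∧
      (∀ᵐ ω ∂P, ∀ x, ‖x - c'‖ ≤ h → ‖tayRep k X c' x ω - tayRep k X c x ω‖ₑ ≤ V ω) ∧
      eLpNorm V q P ≤ ENNReal.ofReal
        ((∑ i ∈ Finset.range (k + 1), (n : ℝ) ^ i) * (A * h ^ ((k : ℝ) + a))) := by
  obtain ⟨M, hM, hMe⟩ := exists_tay_sub_tay ha hA hB hc hc' k X hX
    (fun x hx => hH.holder x hx c hc)
  refine ⟨fun ω => ‖polyBd k M h ω‖ₑ, (stronglyMeasurable_polyBd k M h).enorm, ?_, ?_⟩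
  · have hind := indistinguishable (P := P)
      (u := fun x ω => tayRep k X c' x ω - tayRep k X c x ω) (v := fun x ω => polyRep k M c' x ω)
      (Eventually.of_forall fun ω => (continuous_polyRep k _ c' ω).sub
        (continuous_polyRep k _ c ω))
      (Eventually.of_forall fun ω => continuous_polyRep k M c' ω) (fun x => by
        have h1 := polyRep_ae_eq k M c' x
        rw [← hMe x] at h1
        filter_upwards [h1, tayRep_ae_eq k X c' x, tayRep_ae_eq k X c x,
          Lp.coeFn_sub (tay k X c' x) (tay k X c x)] with ω e1 e2 e3 e4
        rw [e1, e2, e3, e4, Pi.sub_apply])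
    filter_upwards [hind] with ω hω x hx
    rw [hω x, enorm_le_iff_norm_le]
    exact (polyRep_le_polyBd k M hx ω).trans (le_abs_self _)
  · rw [eLpNorm_enorm]
    refine eLpNorm_polyBd_le k M hh.le fun i hi => ?_
    have hik : (i : ℝ) ≤ k := by exact_mod_cast hi
    calc ‖M i‖ * h ^ i ≤ (A * h ^ ((k : ℝ) - i + a)) * h ^ i := by
          gcongr
          refine (hM i hi).trans ?_
          gcongr
      _ = A * h ^ ((k : ℝ) + a) := by
          rw [mul_assoc, ← Real.rpow_natCast, ← Real.rpow_add hh]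
          congr 2
          ring

/-- A maximal inequality over one level of the grid. Only the finitely many pairs of neighbours
inside the ball matter; their number is `O(2 ^ (n m))`, which costs `2 ^ (n m / q)` in `L^q`. -/
lemma exists_level_bd (hq' : q ≠ ⊤) {a A : ℝ} (ha : 0 < a) (hA : 0 ≤ A) (k : ℕ)
    {X : (Fin n → ℝ) → Lp 𝔹 q P} (hX : ContDiff ℝ k X) {x₀ : Fin n → ℝ} {R : ℝ} (hR : 0 < R)
    (r : ℕ) (hH : HolderBd k a (closedBall x₀ (r * R)) X A) (m : ℕ) :
    ∃ D : Ω → ENNReal, Measurable D ∧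
      (∀ᵐ ω ∂P, ∀ (z z' : Fin n → ℤ), gp x₀ R m z ∈ closedBall x₀ (r * R) →
        gp x₀ R (m + 1) z' ∈ closedBall x₀ (r * R) → (∀ i, |2 * z i - z' i| ≤ 2) →
        ∀ x, ‖x - gp x₀ R (m + 1) z'‖ ≤ 2 * (R / 2 ^ m) →
        ‖tayRep k X (gp x₀ R (m + 1) z') x ω - tayRep k X (gp x₀ R m z) x ω‖ₑ ≤ D ω) ∧
      eLpNorm D q P ≤ ENNReal.ofReal (((5 * (2 * r + 1) * 2 ^ m : ℝ) ^ n) ^ (1 / q.toReal) *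
        ((∑ i ∈ Finset.range (k + 1), (n : ℝ) ^ i) *
          (A * (2 * (R / 2 ^ m)) ^ ((k : ℝ) + a)))) := by
  classical
  have hq : q ≠ 0 := (zero_lt_one.trans_le (Fact.out : (1 : ENNReal) ≤ q)).ne'
  set β := (∑ i ∈ Finset.range (k + 1), (n : ℝ) ^ i) * (A * (2 * (R / 2 ^ m)) ^ ((k : ℝ) + a))
  -- Pairs `(z, z')` with `z'` a neighbour are parametrized by `z` and the offset `z' - 2 z`.
  let nb : (Fin n → ℤ) × (Fin n → ℤ) → Fin n → ℤ := fun s i => 2 * s.1 i + s.2 i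
  let good : (Fin n → ℤ) × (Fin n → ℤ) → Prop := fun s =>
    gp x₀ R m s.1 ∈ closedBall x₀ (r * R) ∧ gp x₀ R (m + 1) (nb s) ∈ closedBall x₀ (r * R) ∧
      ∀ i, |2 * s.1 i - nb s i| ≤ 2
  have hV : ∀ s : (Fin n → ℤ) × (Fin n → ℤ), ∃ V : Ω → ENNReal, Measurable V ∧
      (good s → ∀ᵐ ω ∂P, ∀ x, ‖x - gp x₀ R (m + 1) (nb s)‖ ≤ 2 * (R / 2 ^ m) →
        ‖tayRep k X (gp x₀ R (m + 1) (nb s)) x ω - tayRep k X (gp x₀ R m s.1) x ω‖ₑ ≤ V ω) ∧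
      eLpNorm V q P ≤ ENNReal.ofReal β := by
    intro s
    by_cases hs : good s
    · obtain ⟨V, h1, h2, h3⟩ := exists_pair_bd (h := 2 * (R / 2 ^ m)) ha hA
        (convex_closedBall x₀ (r * R)) hs.1 hs.2.1 k hX hH (by positivity)
        ((norm_gp_sub_gp_le hR m hs.2.2).trans (by
          have : 0 < R / 2 ^ m := by positivity
          linarith))
      exact ⟨V, h1, fun _ => h2, h3⟩
    · exact ⟨0, measurable_zero, fun h => absurd h hs, by simp⟩
  choose V hVm hVg hVn using hV
  let I1 : Finset (Fin n → ℤ) := Finset.Icc (fun _ => -(r * 2 ^ m : ℤ)) (fun _ => r * 2 ^ m)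
  let I2 : Finset (Fin n → ℤ) := Finset.Icc (fun _ => -2) (fun _ => 2)
  obtain ⟨D, hDm, hDV, hDn⟩ := exists_max_bd hq hq' (I1 ×ˢ I2) V hVm (fun s _ => hVn s)
  refine ⟨D, hDm, ?_, hDn.trans ?_⟩
  · filter_upwards [ae_all_iff.2 fun s => eventually_imp_distrib_left.2 (hVg s)]
      with ω hω z z' hz hz' hzz x hx
    have e : nb (z, fun i => z' i - 2 * z i) = z' := by
      funext i
      simp [nb]
    have hg : good (z, fun i => z' i - 2 * z i) := ⟨hz, by rw [e]; exact hz', by rw [e]; exact hzz⟩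
    have h1 := hω _ hg x (by rw [e]; exact hx)
    rw [e] at h1
    refine h1.trans (hDV _ ?_ ω)
    rw [Finset.mem_product, Finset.mem_Icc, Finset.mem_Icc]
    have h2 := (gp_mem_iff hR r m z).1 hz
    refine ⟨⟨fun i => (abs_le.1 (h2 i)).1, fun i => (abs_le.1 (h2 i)).2⟩,
      fun i => ?_, fun i => ?_⟩ <;> have := abs_le.1 (hzz i) <;> dsimp only <;> omega
  · have hc1 : (I1.card : ℝ) ≤ ((2 * r + 1) * 2 ^ m : ℝ) ^ n := by
      have : I1.card = (2 * r * 2 ^ m + 1) ^ n := by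
        simp only [I1, Pi.card_Icc, Int.card_Icc, Finset.prod_const, Finset.card_univ,
          Fintype.card_fin]
        congr 1
        zify
        rw [Int.toNat_of_nonneg (by have : (0 : ℤ) ≤ r * 2 ^ m := by positivity
                                    linarith)]
        ring
      rw [this]
      push_cast
      gcongr
      have : (1 : ℝ) ≤ 2 ^ m := one_le_pow₀ (by norm_num)
      linarith
    have hc2 : I2.card = 5 ^ n := by
      simp [I2, Pi.card_Icc, Int.card_Icc]
    have hc : ((I1 ×ˢ I2).card : ENNReal) ≤
        ENNReal.ofReal ((5 * (2 * r + 1) * 2 ^ m : ℝ) ^ n) := by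
      rw [← ENNReal.ofReal_natCast]
      apply ENNReal.ofReal_le_ofReal
      rw [Finset.card_product, hc2, mul_assoc, mul_pow, mul_comm]
      push_cast
      gcongr
    conv_rhs => rw [ENNReal.ofReal_mul (by positivity),
      ← ENNReal.ofReal_rpow_of_nonneg (by positivity) (by positivity)]
    gcongr

/-- Summing the levels: the series is geometric, with ratio `2 ^ (n / q - (k + a)) < 1`. -/
lemma exists_chain_bd (hq' : q ≠ ⊤) {a : ℝ} (ha : 0 < a) (k : ℕ)
    (hexp : (n : ℝ) / q.toReal < k + a) (x₀ : Fin n → ℝ) {R : ℝ} (hR : 0 < R) (r : ℕ) :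
    ∃ K : ℝ, 0 ≤ K ∧ ∀ (X : (Fin n → ℝ) → Lp 𝔹 q P) (A : ℝ), ContDiff ℝ k X → 0 ≤ A →
      HolderBd k a (closedBall x₀ (r * R)) X A →
      ∃ D : ℕ → Ω → ENNReal, (∀ m, Measurable (D m)) ∧
        eLpNorm (fun ω => ∑' m, D m ω) q P ≤ ENNReal.ofReal (K * A) ∧
        ∀ᵐ ω ∂P, GridBd x₀ R r (fun c x => tayRep k X c x ω) (fun m => D m ω) := by
  set ρ : ℝ := 2 ^ ((n : ℝ) / q.toReal - (k + a)) with hρ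
  have hρ0 : 0 < ρ := by positivity
  have hρ1 : ρ < 1 := Real.rpow_lt_one_of_one_lt_of_neg (by norm_num) (by linarith)
  set C : ℝ := ((5 * (2 * r + 1) : ℝ) ^ n) ^ (1 / q.toReal) *
    ((∑ i ∈ Finset.range (k + 1), (n : ℝ) ^ i) * (2 * R) ^ ((k : ℝ) + a)) with hC
  have hC0 : 0 ≤ C := by positivity
  refine ⟨C * (1 - ρ)⁻¹, mul_nonneg hC0 (inv_nonneg.2 (by linarith)), fun X A hX hA hH => ?_⟩
  choose D hDm hDg hDn using exists_level_bd (P := P) hq' ha hA k hX hR r hH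
  refine ⟨D, hDm, ?_, ?_⟩
  · refine (eLpNorm_tsum_le_tsum Fact.out hq' D hDm).trans ?_
    have hlev : ∀ m, eLpNorm (D m) q P ≤ ENNReal.ofReal (C * A * ρ ^ m) := by
      intro m
      refine (hDn m).trans_eq ?_
      congr 1
      have e1 : ((5 * (2 * r + 1) * 2 ^ m : ℝ) ^ n) ^ (1 / q.toReal) =
          ((5 * (2 * r + 1) : ℝ) ^ n) ^ (1 / q.toReal) * (2 ^ ((n : ℝ) / q.toReal)) ^ m := by
        rw [mul_pow, Real.mul_rpow (by positivity) (by positivity), ← pow_mul, ← Real.rpow_natCast 2 (m * n),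
          ← Real.rpow_mul (by norm_num), ← Real.rpow_natCast (2 ^ _) m,
          ← Real.rpow_mul (by norm_num)]
        congr 2
        push_cast
        ring
      have e2 : (2 * (R / 2 ^ m)) ^ ((k : ℝ) + a) =
          (2 * R) ^ ((k : ℝ) + a) * ((2 ^ ((k : ℝ) + a))⁻¹) ^ m := by
        rw [← mul_div_assoc, Real.div_rpow (by positivity) (by positivity), div_eq_mul_inv,
          inv_pow, ← Real.rpow_natCast 2 m, ← Real.rpow_natCast (2 ^ _) m, ← Real.rpow_mul (by norm_num),
          ← Real.rpow_mul (by norm_num), mul_comm (m : ℝ)]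
      have e3 : ρ ^ m = (2 ^ ((n : ℝ) / q.toReal)) ^ m * ((2 ^ ((k : ℝ) + a))⁻¹) ^ m := by
        rw [← mul_pow, hρ, Real.rpow_sub (by norm_num), div_eq_mul_inv]
      rw [e1, e2, e3, hC]
      ring
    refine (ENNReal.tsum_le_tsum hlev).trans_eq ?_
    rw [← ENNReal.ofReal_tsum_of_nonneg (fun m => by positivity)
      ((summable_geometric_of_lt_one hρ0.le hρ1).mul_left _), tsum_mul_left,
      tsum_geometric_of_lt_one hρ0.le hρ1]
    congr 1
    ring
  · filter_upwards [ae_all_iff.2 hDg] with ω hω m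
    exact hω m

/-- The continuous version, as the limit of the Taylor polynomials at the points of the grid. -/
lemma exists_continuous_version [IsFiniteMeasure P] [CompleteSpace 𝔹] (hq' : q ≠ ⊤) {a : ℝ}
    (ha : 0 < a) (k : ℕ) (hexp : (n : ℝ) / q.toReal < k + a) (x₀ : Fin n → ℝ) {R : ℝ}
    (hR : 0 < R) {X : (Fin n → ℝ) → Lp 𝔹 q P} (hX : LocHolder k a X) :
    ∃ Xt : (Fin n → ℝ) → Ω → 𝔹, (∀ ω, Continuous fun x => Xt x ω) ∧
      (∀ x, StronglyMeasurable (Xt x)) ∧ (∀ x, Xt x =ᵐ[P] X x) ∧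
      ∀ᵐ ω ∂P, ∀ x, Tendsto (fun m => tayRep k X (gp x₀ R m (fl x₀ R m x)) x ω) atTop
        (nhds (Xt x ω)) := by
  classical
  have hq : q ≠ 0 := (zero_lt_one.trans_le (Fact.out : (1 : ENNReal) ≤ q)).ne'
  have hgood : ∀ᵐ ω ∂P, ∀ r : ℕ, ∃ D : ℕ → ENNReal,
      GridBd x₀ R r (fun c x => tayRep k X c x ω) D ∧ ∑' m, D m ≠ ⊤ := by
    rw [ae_all_iff]
    intro r
    obtain ⟨K, -, hK⟩ := exists_chain_bd (P := P) (𝔹 := 𝔹) hq' ha k hexp x₀ hR r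
    obtain ⟨A, hA, hH⟩ := hX.bd x₀ (r * R)
    obtain ⟨D, hDm, hDn, hDg⟩ := hK X A hX.contDiff hA hH
    have := ae_ne_top_of_eLpNorm hq hq' (Measurable.tsum hDm)
      (hDn.trans_lt ENNReal.ofReal_lt_top).ne
    filter_upwards [hDg, this] with ω h1 h2
    exact ⟨fun m => D m ω, h1, h2⟩
  -- On a measurable null set that contains the bad paths, the version is set to zero.
  obtain ⟨N, hN, hNm, hN0⟩ := exists_measurable_superset_of_null hgood
  have hlim : ∀ ω ∉ N, ∃ f : (Fin n → ℝ) → 𝔹, Continuous f ∧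
      ∀ x, Tendsto (fun m => tayRep k X (gp x₀ R m (fl x₀ R m x)) x ω) atTop (nhds (f x)) := by
    intro ω hω
    refine exists_continuous_limit (T := fun c x => tayRep k X c x ω) hR
      (fun c => continuous_polyRep k _ c ω) ?_
    by_contra hcon
    exact hω (hN hcon)
  choose! f hfc hft using hlim
  have hNae : ∀ᵐ ω ∂P, ω ∉ N := measure_eq_zero_iff_ae_notMem.1 hN0
  have htend : ∀ᵐ ω ∂P, ∀ x, Tendsto
      (fun m => tayRep k X (gp x₀ R m (fl x₀ R m x)) x ω) atTop
      (nhds (if ω ∈ N then 0 else f ω x)) := by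
    filter_upwards [hNae] with ω hω x
    rw [if_neg hω]
    exact hft ω hω x
  refine ⟨fun x ω => if ω ∈ N then 0 else f ω x, ?_, ?_, ?_, htend⟩
  · intro ω
    by_cases hω : ω ∈ N
    · simpa only [if_pos hω] using continuous_const
    · simpa only [if_neg hω] using hfc ω hω
  · intro x
    refine stronglyMeasurable_of_tendsto atTop
      (f := fun m => Nᶜ.indicator (tayRep k X (gp x₀ R m (fl x₀ R m x)) x))
      (fun m => (stronglyMeasurable_polyRep k _ _ x).indicator hNm.compl) ?_
    rw [tendsto_pi_nhds]
    intro ω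
    by_cases hω : ω ∈ N
    · simp [hω]
    · simpa [hω] using hft ω hω x
  · intro x
    obtain ⟨r, hr⟩ := exists_nat_gt (dist x x₀ / R)
    have hx : x ∈ closedBall x₀ (r * R) := by
      rw [mem_closedBall]
      exact ((div_lt_iff₀ hR).1 hr).le
    obtain ⟨A, hA, hH⟩ := hX.bd x₀ (r * R)
    refine ae_eq_of_tendsto_Lp (f := fun m => tay k X (gp x₀ R m (fl x₀ R m x)) x) ?_
      (fun m => tayRep_ae_eq k X _ x) (htend.mono fun ω h => h x)
    rw [tendsto_iff_norm_sub_tendsto_zero]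
    have hka : 0 < (k : ℝ) + a := by positivity
    refine squeeze_zero (g := fun m : ℕ => A * (R / 2 ^ m) ^ ((k : ℝ) + a))
      (fun _ => norm_nonneg _) (fun m => ?_) ?_
    · rw [norm_sub_rev]
      refine (norm_sub_tay_le ha hA (convex_closedBall x₀ (r * R)) (gp_fl_mem hR r m hx) k X
        hX.contDiff (fun y hy => hH.holder y hy _ (gp_fl_mem hR r m hx)) x hx).trans ?_
      gcongr
      exact norm_sub_gp_fl_le hR m x
    · have h1 : Tendsto (fun m : ℕ => R / 2 ^ m) atTop (nhds 0) := by
        have := (tendsto_pow_atTop_nhds_zero_of_lt_one (r := (1 / 2 : ℝ)) (by norm_num)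
          (by norm_num)).const_mul R
        simpa [div_eq_mul_inv] using this
      have h2 := (h1.rpow_const (p := (k : ℝ) + a) (Or.inr hka.le)).const_mul A
      rwa [Real.zero_rpow hka.ne', mul_zero] at h2

/-- The maximal inequality for continuous versions: the supremum over a ball is controlled in
`L^q` by the `C^{k,a}` norm on the ball. -/
lemma exists_core_bd [IsFiniteMeasure P] [CompleteSpace 𝔹] (hq' : q ≠ ⊤) {a : ℝ}
    (ha : 0 < a) (k : ℕ) (hexp : (n : ℝ) / q.toReal < k + a) (x₀ : Fin n → ℝ) {R : ℝ}
    (hR : 0 < R) : ∃ K : ℝ, 0 ≤ K ∧ ∀ (X : (Fin n → ℝ) → Lp 𝔹 q P) (A : ℝ), LocHolder k a X →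
      0 ≤ A → HolderBd k a (closedBall x₀ R) X A → ∀ Xt : (Fin n → ℝ) → Ω → 𝔹,
      (∀ ω, Continuous fun x => Xt x ω) → (∀ x, Xt x =ᵐ[P] X x) →
      ∃ W : Ω → ENNReal, Measurable W ∧ (∀ᵐ ω ∂P, ∀ x ∈ closedBall x₀ R, ‖Xt x ω‖ₑ ≤ W ω) ∧
        eLpNorm W q P ≤ ENNReal.ofReal (K * A) := by
  obtain ⟨K, hK0, hK⟩ := exists_chain_bd (P := P) (𝔹 := 𝔹) hq' ha k hexp x₀ hR 1
  refine ⟨(∑ i ∈ Finset.range (k + 1), (n : ℝ) ^ i) * (1 + R) ^ k + K, by positivity, ?_⟩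
  intro X A hX hA hH Xt hXtc hXtv
  obtain ⟨D, hDm, hDn, hDg⟩ := hK X A hX.contDiff hA (by simpa using hH)
  obtain ⟨Xt', hc', -, hv', ht'⟩ := exists_continuous_version hq' ha k hexp x₀ hR hX
  have hM : Measurable fun ω => ‖polyBd k (tayCoef X x₀) R ω‖ₑ :=
    (stronglyMeasurable_polyBd k _ R).enorm
  have hS : Measurable fun ω => ∑' m, D m ω := Measurable.tsum hDm
  refine ⟨fun ω => ‖polyBd k (tayCoef X x₀) R ω‖ₑ + ∑' m, D m ω, hM.add hS, ?_, ?_⟩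
  · have hind := indistinguishable (P := P) (Eventually.of_forall hXtc) (Eventually.of_forall hc')
      (fun x => (hXtv x).trans (hv' x).symm)
    filter_upwards [hind, ht', hDg] with ω h1 h2 h3 x hx
    rw [h1 x]
    refine (h3.limit_bound hR hx (h2 x)).trans ?_
    gcongr
    rw [enorm_le_iff_norm_le]
    refine (polyRep_le_polyBd k _ ?_ ω).trans (le_abs_self _)
    rwa [← dist_eq_norm]
  · refine (eLpNorm_add_le hM.aestronglyMeasurable hS.aestronglyMeasurable Fact.out).trans ?_
    rw [add_mul, ENNReal.ofReal_add (by positivity) (by positivity), eLpNorm_enorm]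
    refine add_le_add ?_ hDn
    rw [mul_assoc]
    refine eLpNorm_polyBd_le k _ hR.le fun i hi => ?_
    have h1 : ‖tayCoef X x₀ i‖ ≤ A := by
      rw [tayCoef, norm_smul, norm_inv, Real.norm_of_nonneg (by positivity)]
      refine (mul_le_of_le_one_left (norm_nonneg _) (inv_le_one_of_one_le₀ ?_)).trans
        (hH.bd i hi x₀ (mem_closedBall_self hR.le))
      exact_mod_cast Nat.factorial_pos i
    have h2 : R ^ i ≤ (1 + R) ^ k := by
      calc R ^ i ≤ (1 + R) ^ i := by gcongr; linarith
        _ ≤ (1 + R) ^ k := pow_le_pow_right₀ (by linarith) hi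
    rw [mul_comm]
    gcongr

end Core

/-! ### Derivatives of versions -/

/-- Riemann sums of a continuous derivative converge to the increment of the function. -/
lemma tendsto_riemann_sum {F : Type*} [NormedAddCommGroup F] [NormedSpace ℝ F] {G g : ℝ → F}
    (hg : Continuous g) (hG : ∀ t, HasDerivAt G (g t) t) :
    Tendsto (fun N : ℕ => ∑ l ∈ Finset.range (N + 1),
      ((N : ℝ) + 1)⁻¹ • g (l * ((N : ℝ) + 1)⁻¹)) atTop (nhds (G 1 - G 0)) := by
  rw [Metric.tendsto_atTop]
  intro ε hε
  have huc := isCompact_Icc.uniformContinuousOn_of_continuous (hg.continuousOn (s := Icc 0 1))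
  obtain ⟨δ, hδ, hδg⟩ := Metric.uniformContinuousOn_iff.1 huc (ε / 2) (by positivity)
  obtain ⟨N0, hN0⟩ := exists_nat_gt δ⁻¹
  refine ⟨N0, fun N hN => ?_⟩
  set s : ℝ := ((N : ℝ) + 1)⁻¹ with hs
  have hs0 : 0 < s := by positivity
  have hNs : ((N : ℝ) + 1) * s = 1 := mul_inv_cancel₀ (by positivity)
  have hsδ : s < δ := by
    rw [hs, inv_lt_comm₀ (by positivity) hδ]
    have : (N0 : ℝ) ≤ N := by exact_mod_cast hN
    linarith
  have hstep : ∀ l ∈ Finset.range (N + 1),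
      ‖(G ((l + 1 : ℕ) * s) - G (l * s)) - s • g (l * s)‖ ≤ ε / 2 * s := by
    intro l hl
    have hl1 : (l : ℝ) + 1 ≤ N + 1 := by
      have := Finset.mem_range.1 hl
      exact_mod_cast this
    have hb : ((l : ℝ) + 1) * s ≤ 1 := (mul_le_mul_of_nonneg_right hl1 hs0.le).trans_eq hNs
    have hl0 : (0 : ℝ) ≤ l * s := by positivity
    have hd : ∀ t ∈ Icc (l * s) (((l + 1 : ℕ) : ℝ) * s),
        HasDerivWithinAt (fun t => G t - t • g (l * s)) (g t - g (l * s))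
          (Icc (l * s) (((l + 1 : ℕ) : ℝ) * s)) t := by
      intro t _
      have h1 : HasDerivAt (fun t : ℝ => t • g (l * s)) (g (l * s)) t := by
        simpa using (hasDerivAt_id t).smul_const (g (l * s))
      exact ((hG t).sub h1).hasDerivWithinAt
    have hbd : ∀ t ∈ Ico (l * s) (((l + 1 : ℕ) : ℝ) * s), ‖g t - g (l * s)‖ ≤ ε / 2 := by
      intro t ht
      push_cast at ht
      rw [← dist_eq_norm]
      refine (hδg t ⟨hl0.trans ht.1, ht.2.le.trans hb⟩ (l * s) ⟨hl0, by nlinarith⟩ ?_).le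
      rw [Real.dist_eq, abs_of_nonneg (by linarith [ht.1])]
      linarith [ht.2]
    have := norm_image_sub_le_of_norm_deriv_le_segment' hd hbd (((l + 1 : ℕ) : ℝ) * s)
      (right_mem_Icc.2 (by push_cast; nlinarith))
    have e1 : ((l + 1 : ℕ) : ℝ) * s - l * s = s := by push_cast; ring
    rw [e1] at this
    refine le_trans (le_of_eq ?_) this
    congr 1
    have e2 : s • g (l * s) = (((l + 1 : ℕ) : ℝ) * s) • g (l * s) - (l * s) • g (l * s) := by
      rw [← sub_smul, e1]
    rw [e2]
    abel
  have htel : G 1 - G 0 = ∑ l ∈ Finset.range (N + 1), (G ((l + 1 : ℕ) * s) - G (l * s)) := by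
    rw [Finset.sum_range_sub (fun l : ℕ => G (l * s))]
    push_cast
    rw [hNs, zero_mul]
  rw [dist_comm, dist_eq_norm, htel, ← Finset.sum_sub_distrib]
  refine (norm_sum_le _ _).trans_lt ((Finset.sum_le_sum hstep).trans_lt ?_)
  rw [Finset.sum_const, Finset.card_range, nsmul_eq_mul]
  push_cast
  calc ((N : ℝ) + 1) * (ε / 2 * s) = ε / 2 * (((N : ℝ) + 1) * s) := by ring
    _ < ε := by rw [hNs]; linarith

/-- A function whose increments are the integrals of a continuous field of linear maps along
segments is differentiable, and the field is its derivative. -/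
lemma hasFDerivAt_of_integral {E F : Type*} [NormedAddCommGroup E] [NormedSpace ℝ E]
    [NormedAddCommGroup F] [NormedSpace ℝ F] [CompleteSpace F] {f : E → F} {L : E → E →L[ℝ] F}
    (hL : Continuous L) (h : ∀ x v, f (x + v) - f x = ∫ s in (0 : ℝ)..1, L (x + s • v) v) (x : E) :
    HasFDerivAt f (L x) x := by
  rw [hasFDerivAt_iff_isLittleO_nhds_zero, Asymptotics.isLittleO_iff]
  intro ε hε
  obtain ⟨δ, hδ, hδL⟩ := Metric.continuousAt_iff.1 (hL.continuousAt (x := x)) ε hε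
  filter_upwards [Metric.ball_mem_nhds (0 : E) hδ] with v hv
  rw [mem_ball_zero_iff] at hv
  have hc : Continuous fun s : ℝ => L (x + s • v) v := by fun_prop
  have e : f (x + v) - f x - L x v = ∫ s in (0 : ℝ)..1, (L (x + s • v) - L x) v := by
    simp only [_root_.sub_apply]
    rw [intervalIntegral.integral_sub (hc.intervalIntegrable _ _) (by simp), h]
    simp
  rw [e]
  have := intervalIntegral.norm_integral_le_of_norm_le_const (a := (0 : ℝ)) (b := 1)
    (C := ε * ‖v‖) (f := fun s => (L (x + s • v) - L x) v) (fun s hs => by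
      rw [uIoc_of_le zero_le_one] at hs
      refine (ContinuousLinearMap.le_opNorm _ _).trans ?_
      gcongr
      rw [← dist_eq_norm]
      refine (hδL ?_).le
      rw [dist_eq_norm, add_sub_cancel_left, norm_smul, Real.norm_of_nonneg hs.1.le]
      exact (mul_le_of_le_one_left (norm_nonneg _) hs.2).trans_lt hv)
  simpa using this

section HolderDeriv

variable {n : ℕ} {F : Type*} [NormedAddCommGroup F] [NormedSpace ℝ F] {k : ℕ} {a : ℝ}

lemma HolderBd.fderiv_apply {B : Set (Fin n → ℝ)} {X : (Fin n → ℝ) → F} {A : ℝ}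
    (hX : ContDiff ℝ (k + 1 : ℕ) X) (h : HolderBd (k + 1) a B X A) {e : Fin n → ℝ}
    (he : ‖e‖ ≤ 1) : HolderBd k a B (fun x => fderiv ℝ X x e) A := by
  have hd : ContDiff ℝ k (fderiv ℝ X) := hX.fderiv_right (by norm_cast)
  let L : ((Fin n → ℝ) →L[ℝ] F) →L[ℝ] F := ContinuousLinearMap.apply ℝ F e
  have hL : ‖L‖ ≤ 1 := by
    refine L.opNorm_le_bound zero_le_one fun φ => ?_
    rw [one_mul]
    exact (φ.le_opNorm e).trans (mul_le_of_le_one_right (norm_nonneg _) he)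
  have hi : ∀ i ≤ k, ∀ x, iteratedFDeriv ℝ i (fun x => fderiv ℝ X x e) x =
      L.compContinuousMultilinearMap (iteratedFDeriv ℝ i (fderiv ℝ X) x) := fun i hi x =>
    L.iteratedFDeriv_comp_left hd.contDiffAt (by exact_mod_cast hi)
  constructor
  · intro i hik x hx
    rw [hi i hik x]
    refine (L.norm_compContinuousMultilinearMap_le _).trans
      ((mul_le_of_le_one_left (norm_nonneg _) hL).trans ?_)
    rw [norm_iteratedFDeriv_fderiv]
    exact h.bd (i + 1) (by omega) x hx
  · intro x hx y hy
    have hsub : L.compContinuousMultilinearMap (iteratedFDeriv ℝ k (fderiv ℝ X) x) -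
        L.compContinuousMultilinearMap (iteratedFDeriv ℝ k (fderiv ℝ X) y) =
        L.compContinuousMultilinearMap (iteratedFDeriv ℝ k (fderiv ℝ X) x -
          iteratedFDeriv ℝ k (fderiv ℝ X) y) := by
      ext w
      simp
    rw [hi k le_rfl x, hi k le_rfl y, hsub]
    refine (L.norm_compContinuousMultilinearMap_le _).trans
      ((mul_le_of_le_one_left (norm_nonneg _) hL).trans ?_)
    rw [norm_iteratedFDeriv_fderiv_sub]
    exact h.holder x hx y hy

lemma LocHolder.fderiv_apply {X : (Fin n → ℝ) → F} (h : LocHolder (k + 1) a X) {e : Fin n → ℝ}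
    (he : ‖e‖ ≤ 1) : LocHolder k a (fun x => fderiv ℝ X x e) := by
  refine ⟨(h.contDiff.fderiv_right (by norm_cast)).clm_apply contDiff_const, fun c R => ?_⟩
  obtain ⟨A, hA, hH⟩ := h.bd c R
  exact ⟨A, hA, hH.fderiv_apply h.contDiff he⟩

lemma iteratedFDeriv_succ_apply_left_of_contDiff {E : Type*} [NormedAddCommGroup E]
    [NormedSpace ℝ E] {f : E → F} {i : ℕ} (hf : ContDiff ℝ (i + 1 : ℕ) f) (x : E)
    (v : Fin (i + 1) → E) : iteratedFDeriv ℝ (i + 1) f x v =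
      fderiv ℝ (fun y => iteratedFDeriv ℝ i f y (Fin.tail v)) x (v 0) :=
  DifferentiableAt.iteratedFDeriv_succ_apply_left'
    (hf.differentiable_iteratedFDeriv (by norm_cast; omega) x)

lemma hasFDerivAt_iteratedFDeriv_apply {E : Type*} [NormedAddCommGroup E]
    [NormedSpace ℝ E] {f : E → F} {i : ℕ} (hf : ContDiff ℝ (i + 1 : ℕ) f) (x : E)
    (v : Fin i → E) : HasFDerivAt (fun y => iteratedFDeriv ℝ i f y v)
      (fderiv ℝ (fun y => iteratedFDeriv ℝ i f y v) x) x := by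
  have h1 := hf.differentiable_iteratedFDeriv (m := i) (by norm_cast; omega) x
  exact (h1.continuousMultilinear_apply_const v).hasFDerivAt

/-- Directional derivatives of order `i` along vectors of norm at most `1` lose `i` orders of
differentiability, and keep the bound. -/
lemma iterated_holder {X : (Fin n → ℝ) → F} (hX : LocHolder k a X) (i : ℕ) :
    i ≤ k → ∀ v : Fin i → Fin n → ℝ, (∀ l, ‖v l‖ ≤ 1) →
      LocHolder (k - i) a (fun x => iteratedFDeriv ℝ i X x v) ∧
      ∀ B A, HolderBd k a B X A →
        HolderBd (k - i) a B (fun x => iteratedFDeriv ℝ i X x v) A := by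
  induction i with
  | zero =>
    intro _ v _
    have e : (fun x => iteratedFDeriv ℝ 0 X x v) = X := by
      funext x
      simp
    rw [e]
    exact ⟨hX, fun B A h => h⟩
  | succ i ih =>
    intro hi v hv
    obtain ⟨h1, h2⟩ := ih (by omega) (Fin.tail v) (fun l => hv l.succ)
    have e : (fun x => iteratedFDeriv ℝ (i + 1) X x v) = fun x =>
        fderiv ℝ (fun y => iteratedFDeriv ℝ i X y (Fin.tail v)) x (v 0) := by
      funext x
      exact iteratedFDeriv_succ_apply_left_of_contDiff
        (hX.contDiff.of_le (by exact_mod_cast hi)) x v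
    have hk : k - i = (k - (i + 1)) + 1 := by omega
    rw [e]
    rw [hk] at h1 h2
    exact ⟨h1.fderiv_apply (hv 0), fun B A hB => (h2 B A hB).fderiv_apply h1.contDiff (hv 0)⟩

end HolderDeriv

section Versions

variable {Ω : Type*} {mΩ : MeasurableSpace Ω} {P : Measure Ω} [IsFiniteMeasure P]
  {𝔹 : Type*} [NormedAddCommGroup 𝔹] [NormedSpace ℝ 𝔹] {q : ENNReal} [Fact (1 ≤ q)] {n : ℕ}

/-- The pathwise derivatives of a smooth version are versions of the derivatives: both are limits
of difference quotients. -/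
lemma iteratedFDeriv_version {j : ℕ} {X : (Fin n → ℝ) → Lp 𝔹 q P} (hX : ContDiff ℝ j X)
    {Xt : (Fin n → ℝ) → Ω → 𝔹} (hXt : ∀ ω, ContDiff ℝ j fun x => Xt x ω)
    (hv : ∀ x, Xt x =ᵐ[P] X x) (i : ℕ) : i ≤ j → ∀ (x : Fin n → ℝ) (v : Fin i → Fin n → ℝ),
      (fun ω => iteratedFDeriv ℝ i (fun y => Xt y ω) x v)
        =ᵐ[P] (iteratedFDeriv ℝ i X x v : Lp 𝔹 q P) := by
  induction i with
  | zero =>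
    intro _ x v
    simpa using hv x
  | succ i ih =>
    intro hi x v
    have hi' : ((i + 1 : ℕ) : WithTop ℕ∞) ≤ j := by exact_mod_cast hi
    have hc : Tendsto (fun N : ℕ => ‖(N : ℝ)‖) atTop atTop := by
      simpa using tendsto_natCast_atTop_atTop (R := ℝ)
    rw [iteratedFDeriv_succ_apply_left_of_contDiff (hX.of_le hi')]
    refine ae_eq_of_tendsto_Lp ((hasFDerivAt_iteratedFDeriv_apply (hX.of_le hi') x _).lim (v 0) hc)
      (u := fun N ω => (N : ℝ) • (iteratedFDeriv ℝ i (fun y => Xt y ω)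
        (x + (N : ℝ)⁻¹ • v 0) (Fin.tail v) - iteratedFDeriv ℝ i (fun y => Xt y ω) x (Fin.tail v)))
      (fun N => ?_) (Eventually.of_forall fun ω => ?_)
    · have e1 := Lp.coeFn_sub (iteratedFDeriv ℝ i X (x + (N : ℝ)⁻¹ • v 0) (Fin.tail v))
        (iteratedFDeriv ℝ i X x (Fin.tail v))
      have e2 := Lp.coeFn_smul (N : ℝ) (iteratedFDeriv ℝ i X (x + (N : ℝ)⁻¹ • v 0) (Fin.tail v) -
        iteratedFDeriv ℝ i X x (Fin.tail v))
      filter_upwards [e1, e2, ih (by omega) x (Fin.tail v),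
        ih (by omega) (x + (N : ℝ)⁻¹ • v 0) (Fin.tail v)] with ω h1 h2 h3 h4
      rw [h2, Pi.smul_apply, h1, Pi.sub_apply, h3, h4]
    · rw [iteratedFDeriv_succ_apply_left_of_contDiff ((hXt ω).of_le hi')]
      exact (hasFDerivAt_iteratedFDeriv_apply ((hXt ω).of_le hi') x _).lim (v 0) hc

/-- The derivative of a `C^1` map into `L^q` is realized pathwise by continuous versions of its
partial derivatives: integrating them along segments recovers the increments of `X`. In both
settings the integral is a limit of Riemann sums, which involve finitely many points. -/
lemma integral_version [CompleteSpace 𝔹] {X : (Fin n → ℝ) → Lp 𝔹 q P} (hX : ContDiff ℝ 1 X)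
    {L : (Fin n → ℝ) → Ω → (Fin n → ℝ) →L[ℝ] 𝔹} (hLc : ∀ ω, Continuous fun x => L x ω)
    (hL : ∀ x v, (fun ω => L x ω v) =ᵐ[P] (fderiv ℝ X x v : Lp 𝔹 q P)) (x v : Fin n → ℝ) :
    (fun ω => ∫ s in (0 : ℝ)..1, L (x + s • v) ω v) =ᵐ[P] (X (x + v) - X x : Lp 𝔹 q P) := by
  have hdX : Continuous (fderiv ℝ X) := hX.continuous_fderiv one_ne_zero
  have hG : ∀ t : ℝ, HasDerivAt (fun t => X (x + t • v)) (fderiv ℝ X (x + t • v) v) t := by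
    intro t
    have h1 : HasDerivAt (fun t : ℝ => x + t • v) v t := by
      simpa using ((hasDerivAt_id t).smul_const v).const_add x
    exact ((hX.differentiable one_ne_zero) _).hasFDerivAt.comp_hasDerivAt t h1
  have hlim := tendsto_riemann_sum (G := fun t => X (x + t • v))
    (g := fun t => fderiv ℝ X (x + t • v) v) (by fun_prop) hG
  simp only [one_smul, zero_smul, add_zero] at hlim
  refine ae_eq_of_tendsto_Lp hlim (u := fun N ω => ∑ l ∈ Finset.range (N + 1),
      ((N : ℝ) + 1)⁻¹ • L (x + (l * ((N : ℝ) + 1)⁻¹) • v) ω v) (fun N => ?_)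
    (Eventually.of_forall fun ω => ?_)
  · have e1 := Lp_coeFn_sum (P := P) (q := q) (Finset.range (N + 1)) (fun l : ℕ =>
      ((N : ℝ) + 1)⁻¹ • fderiv ℝ X (x + (l * ((N : ℝ) + 1)⁻¹) • v) v)
    have e2 := ae_all_iff.2 fun l : ℕ => Lp.coeFn_smul ((N : ℝ) + 1)⁻¹
      (fderiv ℝ X (x + (l * ((N : ℝ) + 1)⁻¹) • v) v)
    have e3 := ae_all_iff.2 fun l : ℕ => hL (x + (l * ((N : ℝ) + 1)⁻¹) • v) v
    filter_upwards [e1, e2, e3] with ω h1 h2 h3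
    rw [h1]
    refine Finset.sum_congr rfl fun l _ => ?_
    rw [h2 l, Pi.smul_apply, h3 l]
  · have hc : Continuous fun s : ℝ => L (x + s • v) ω v := by
      have := hLc ω
      fun_prop
    have := tendsto_riemann_sum (G := fun t => ∫ s in (0 : ℝ)..t, L (x + s • v) ω v) hc
      (fun t => (hc.integral_hasStrictDerivAt 0 t).hasDerivAt)
    simpa using this

/-- Existence of the regular version. For `j + 1` derivatives, regular versions of the partial
derivatives are integrated along segments. -/
lemma exists_smooth_version [CompleteSpace 𝔹] (hq' : q ≠ ⊤) {a : ℝ} (ha : 0 < a) (ha1 : a ≤ 1)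
    (j : ℕ) : ∀ (k : ℕ) (X : (Fin n → ℝ) → Lp 𝔹 q P), (n : ℝ) / q.toReal + j < k + a →
      LocHolder k a X → ∃ Xt : (Fin n → ℝ) → Ω → 𝔹, (∀ ω, ContDiff ℝ j fun x => Xt x ω) ∧
        (∀ x, StronglyMeasurable (Xt x)) ∧ (∀ x, Xt x =ᵐ[P] X x) := by
  classical
  induction j with
  | zero =>
    intro k X hexp hX
    obtain ⟨Xt, h1, h2, h3, -⟩ := exists_continuous_version hq' ha k (by simpa using hexp) 0
      one_pos hX
    exact ⟨Xt, fun ω => by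
      rw [Nat.cast_zero]
      exact contDiff_zero.2 (h1 ω), h2, h3⟩
  | succ j ih =>
    intro k X hexp hX
    have hnq : 0 ≤ (n : ℝ) / q.toReal := by positivity
    push_cast at hexp
    have hj0 : (0 : ℝ) ≤ j := Nat.cast_nonneg j
    obtain ⟨k, rfl⟩ : ∃ k', k = k' + 1 := by
      refine Nat.exists_eq_succ_of_ne_zero ?_
      rintro rfl
      push_cast at hexp
      linarith
    push_cast at hexp
    obtain ⟨X0, h0c, h0m, h0v, -⟩ := exists_continuous_version hq' ha (k + 1)
      (by push_cast; linarith) 0 one_pos hX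
    have hsing : ∀ i : Fin n, ‖(Pi.single i (1 : ℝ) : Fin n → ℝ)‖ ≤ 1 := by
      intro i
      rw [Pi.norm_single]
      simp
    choose Z hZc hZm hZv using fun i : Fin n =>
      ih k (fun x => fderiv ℝ X x (Pi.single i 1)) (by linarith) (hX.fderiv_apply (hsing i))
    let L : (Fin n → ℝ) → Ω → (Fin n → ℝ) →L[ℝ] 𝔹 := fun x ω =>
      ∑ i, (ContinuousLinearMap.proj (R := ℝ) (φ := fun _ : Fin n => ℝ) i).smulRight (Z i x ω)
    have hLa : ∀ x ω v, L x ω v = ∑ i, v i • Z i x ω := by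
      intro x ω v
      simp [L]
    have hLc : ∀ ω, ContDiff ℝ j fun x => L x ω := by
      intro ω
      refine ContDiff.sum fun i _ => ?_
      exact (ContinuousLinearMap.smulRightL ℝ (Fin n → ℝ) 𝔹
        (ContinuousLinearMap.proj i)).contDiff.comp (hZc i ω)
    have hLv : ∀ x v, (fun ω => L x ω v) =ᵐ[P] (fderiv ℝ X x v : Lp 𝔹 q P) := by
      intro x v
      have e : fderiv ℝ X x v = ∑ i, v i • fderiv ℝ X x (Pi.single i 1) := by
        conv_lhs => rw [pi_eq_sum_univ' v]
        rw [map_sum]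
        exact Finset.sum_congr rfl fun i _ => map_smul _ _ _
      have e1 := Lp_coeFn_sum (P := P) (q := q) Finset.univ
        (fun i => v i • fderiv ℝ X x (Pi.single i 1))
      have e2 := ae_all_iff.2 fun i => Lp.coeFn_smul (v i) (fderiv ℝ X x (Pi.single i 1))
      have e3 := ae_all_iff.2 fun i => hZv i x
      rw [e]
      filter_upwards [e1, e2, e3] with ω h1 h2 h3
      rw [h1, hLa]
      refine Finset.sum_congr rfl fun i _ => ?_
      rw [h2 i, Pi.smul_apply, h3 i]
    have hX1 : ContDiff ℝ 1 X := hX.contDiff.of_le (by norm_cast; omega)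
    have hind := indistinguishable (P := P) (S := (Fin n → ℝ) × (Fin n → ℝ))
      (u := fun s ω => X0 (s.1 + s.2) ω - X0 s.1 ω)
      (v := fun s ω => ∫ t in (0 : ℝ)..1, L (s.1 + t • s.2) ω s.2)
      (Eventually.of_forall fun ω => by
        have := h0c ω
        fun_prop)
      (Eventually.of_forall fun ω => by
        have := (hLc ω).continuous
        refine intervalIntegral.continuous_parametric_intervalIntegral_of_continuous' ?_ 0 1
        simp only [Function.uncurry_def]
        fun_prop)
      (fun s => by
        filter_upwards [integral_version hX1 (fun ω => (hLc ω).continuous) hLv s.1 s.2,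
          h0v (s.1 + s.2), h0v s.1, Lp.coeFn_sub (X (s.1 + s.2)) (X s.1)] with ω h1 h2 h3 h4
        rw [h1, h2, h3, h4, Pi.sub_apply])
    -- Paths violating the integral identity are set to zero, on a measurable null set.
    obtain ⟨N, hN, hNm, hN0⟩ := exists_measurable_superset_of_null hind
    have hNae : ∀ᵐ ω ∂P, ω ∉ N := measure_eq_zero_iff_ae_notMem.1 hN0
    refine ⟨fun x => Nᶜ.indicator (X0 x), fun ω => ?_,
      fun x => (h0m x).indicator hNm.compl, fun x => ?_⟩
    · by_cases hω : ω ∈ N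
      · simpa [hω] using contDiff_const
      · have e : (fun x => Nᶜ.indicator (X0 x) ω) = fun x => X0 x ω := by
          funext x
          simp [hω]
        rw [e]
        have hint : ∀ s : (Fin n → ℝ) × (Fin n → ℝ), X0 (s.1 + s.2) ω - X0 s.1 ω =
            ∫ t in (0 : ℝ)..1, L (s.1 + t • s.2) ω s.2 := by
          by_contra hcon
          exact hω (hN hcon)
        have := contDiff_succ_iff_hasFDerivAt.2 ⟨fun x => L x ω, hLc ω, fun x =>
          hasFDerivAt_of_integral (f := fun x => X0 x ω) (hLc ω).continuous
            (fun x v => hint (x, v)) x⟩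
        exact_mod_cast this
    · filter_upwards [hNae, h0v x] with ω h1 h2
      rw [indicator_of_mem (by exact h1), h2]

end Versions

/-! ### The moment bound -/

section Seminorms

variable {n : ℕ} {F : Type*} [NormedAddCommGroup F] [NormedSpace ℝ F] {k : ℕ}

lemma locHolder_of_holderOnWith {a : NNReal} {X : (Fin n → ℝ) → F} (hX : ContDiff ℝ k X)
    (hXa : ∀ x₀ : Fin n → ℝ, ∀ R : ℝ, 0 < R → ∃ C : NNReal,
      HolderOnWith C a (iteratedFDeriv ℝ k X) (closedBall x₀ R)) : LocHolder k a X := by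
  refine ⟨hX, fun c R => ?_⟩
  obtain ⟨C, hC⟩ := hXa c (max R 1) (by positivity)
  have hM : ∀ i : ℕ, ∃ M : ℝ, i ≤ k → ∀ x ∈ closedBall c R, ‖iteratedFDeriv ℝ i X x‖ ≤ M := by
    intro i
    by_cases hi : i ≤ k
    · obtain ⟨M, hM⟩ := (isCompact_closedBall c R).exists_bound_of_continuousOn
        (hX.continuous_iteratedFDeriv (m := i) (by exact_mod_cast hi)).continuousOn
      exact ⟨M, fun _ => hM⟩
    · exact ⟨0, fun h => absurd h hi⟩
  choose M hM using hM
  refine ⟨C + ∑ i ∈ Finset.range (k + 1), |M i|, by positivity, ?_, ?_⟩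
  · intro i hi x hx
    have h1 : |M i| ≤ ∑ i ∈ Finset.range (k + 1), |M i| :=
      Finset.single_le_sum (f := fun i => |M i|) (fun _ _ => abs_nonneg _)
        (Finset.mem_range.2 (by omega))
    have h2 := hM i hi x hx
    have h3 := le_abs_self (M i)
    have h4 : (0 : ℝ) ≤ C := C.2
    linarith
  · intro x hx y hy
    have hsub : closedBall c R ⊆ closedBall c (max R 1) :=
      closedBall_subset_closedBall (le_max_left _ _)
    have h1 := hC.dist_le (hsub hx) (hsub hy)
    rw [dist_eq_norm, dist_eq_norm] at h1
    refine h1.trans ?_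
    gcongr
    exact le_add_of_nonneg_right (by positivity)

/-- A real supremum over a set, in which points outside the set contribute `0`, is at least the
value at each point of the set, provided the function is bounded there. -/
lemma le_real_biSup {E : Type*} {B : Set E} {f : E → ℝ} (hf : ∀ x ∈ B, 0 ≤ f x) {M : ℝ}
    (hM : ∀ x ∈ B, f x ≤ M) {x : E} (hx : x ∈ B) : f x ≤ ⨆ x ∈ B, f x := by
  have hM0 : 0 ≤ M := (hf x hx).trans (hM x hx)
  have hb : BddAbove (range fun x => ⨆ _ : x ∈ B, f x) := by
    refine ⟨M, ?_⟩
    rintro _ ⟨y, rfl⟩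
    exact Real.iSup_le (fun hy => hM y hy) hM0
  refine le_trans ?_ (le_ciSup hb x)
  exact (ciSup_pos (f := fun _ => f x) hx).ge

/-- The `C^{k,a}` norm of `X` on `B`: the sum of the suprema of the derivatives of order at most `k`,
plus the Hölder seminorm of the `k`-th derivative. The quotient is `0` at `x = y`, and a supremum of
an unbounded family of reals is `0`. -/
def holderNorm (k : ℕ) (a : ℝ) (B : Set (Fin n → ℝ)) (X : (Fin n → ℝ) → F) : ℝ :=
  (∑ i ∈ Finset.range (k + 1), ⨆ x ∈ B, ‖iteratedFDeriv ℝ i X x‖) +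
    ⨆ x ∈ B, ⨆ y ∈ B, ‖iteratedFDeriv ℝ k X x - iteratedFDeriv ℝ k X y‖ / ‖x - y‖ ^ a

lemma holderNorm_nonneg (k : ℕ) (a : ℝ) (B : Set (Fin n → ℝ)) (X : (Fin n → ℝ) → F) :
    0 ≤ holderNorm k a B X :=
  add_nonneg (Finset.sum_nonneg fun _ _ => Real.iSup_nonneg fun _ => Real.iSup_nonneg fun _ =>
    norm_nonneg _) (Real.iSup_nonneg fun _ => Real.iSup_nonneg fun _ => Real.iSup_nonneg fun _ =>
    Real.iSup_nonneg fun _ => by positivity)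

lemma LocHolder.holderBd_holderNorm {a : ℝ} {X : (Fin n → ℝ) → F} (hX : LocHolder k a X)
    (x₀ : Fin n → ℝ) (R : ℝ) :
    HolderBd k a (closedBall x₀ R) X (holderNorm k a (closedBall x₀ R) X) := by
  obtain ⟨A, hA, hH⟩ := hX.bd x₀ R
  set B := closedBall x₀ R
  set S1 := ∑ i ∈ Finset.range (k + 1), ⨆ x ∈ B, ‖iteratedFDeriv ℝ i X x‖ with hS1
  set S2 := ⨆ x ∈ B, ⨆ y ∈ B,
    ‖iteratedFDeriv ℝ k X x - iteratedFDeriv ℝ k X y‖ / ‖x - y‖ ^ a with hS2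
  have h1 : 0 ≤ S1 := Finset.sum_nonneg fun _ _ => Real.iSup_nonneg fun _ =>
    Real.iSup_nonneg fun _ => norm_nonneg _
  have h2 : 0 ≤ S2 := Real.iSup_nonneg fun _ => Real.iSup_nonneg fun _ => Real.iSup_nonneg fun _ =>
    Real.iSup_nonneg fun _ => by positivity
  have e : holderNorm k a B X = S1 + S2 := rfl
  rw [e]
  constructor
  · intro i hi x hx
    have h3 : ‖iteratedFDeriv ℝ i X x‖ ≤ ⨆ x ∈ B, ‖iteratedFDeriv ℝ i X x‖ :=
      le_real_biSup (f := fun x => ‖iteratedFDeriv ℝ i X x‖) (fun _ _ => norm_nonneg _)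
        (hH.bd i hi) hx
    have h4 : (⨆ x ∈ B, ‖iteratedFDeriv ℝ i X x‖) ≤ S1 :=
      Finset.single_le_sum (f := fun i => ⨆ x ∈ B, ‖iteratedFDeriv ℝ i X x‖)
        (fun _ _ => Real.iSup_nonneg fun _ => Real.iSup_nonneg fun _ => norm_nonneg _)
        (Finset.mem_range.2 (by omega))
    linarith
  · intro x hx y hy
    rcases eq_or_ne x y with rfl | hxy
    · rw [sub_self, norm_zero]
      positivity
    · have hpos : 0 < ‖x - y‖ ^ a := Real.rpow_pos_of_pos (norm_pos_iff.2 (sub_ne_zero.2 hxy)) _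
      have hq : ∀ x ∈ B, ∀ y ∈ B,
          ‖iteratedFDeriv ℝ k X x - iteratedFDeriv ℝ k X y‖ / ‖x - y‖ ^ a ≤ A := by
        intro x hx y hy
        exact div_le_of_le_mul₀ (by positivity) hA (hH.holder x hx y hy)
      have h3 := le_real_biSup (B := B)
        (f := fun y => ‖iteratedFDeriv ℝ k X x - iteratedFDeriv ℝ k X y‖ / ‖x - y‖ ^ a)
        (fun _ _ => by positivity) (hq x hx) hy
      have h4 := le_real_biSup (B := B) (f := fun x => ⨆ y ∈ B,
          ‖iteratedFDeriv ℝ k X x - iteratedFDeriv ℝ k X y‖ / ‖x - y‖ ^ a)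
        (fun _ _ => Real.iSup_nonneg fun _ => Real.iSup_nonneg fun _ => by positivity)
        (fun x hx => Real.iSup_le (fun y => Real.iSup_le (fun hy => hq x hx y hy) hA) hA) hx
      rw [← div_le_iff₀ hpos]
      have h5 := h3.trans h4
      linarith

end Seminorms

lemma eLpNorm_sum_le_ofReal {Ω : Type*} {mΩ : MeasurableSpace Ω} {P : Measure Ω} {q : ENNReal}
    (hq : 1 ≤ q) {ι : Type*} [Fintype ι] {W : ι → Ω → ENNReal} {c : ι → ℝ} (hc : ∀ i, 0 ≤ c i)
    (hW : ∀ i, Measurable (W i)) (h : ∀ i, eLpNorm (W i) q P ≤ ENNReal.ofReal (c i)) :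
    eLpNorm (fun ω => ∑ i, W i ω) q P ≤ ENNReal.ofReal (∑ i, c i) := by
  rw [ENNReal.ofReal_sum_of_nonneg fun i _ => hc i]
  have e : (fun ω => ∑ i, W i ω) = ∑ i, W i := by
    funext ω
    simp
  rw [e]
  exact (eLpNorm_sum_le (s := Finset.univ) (f := W) (fun i _ => (hW i).aestronglyMeasurable)
    hq).trans (Finset.sum_le_sum fun i _ => h i)

section Moment

variable {Ω : Type*} {mΩ : MeasurableSpace Ω} {P : Measure Ω} [IsFiniteMeasure P]
  {𝔹 : Type*} [NormedAddCommGroup 𝔹] [NormedSpace ℝ 𝔹] [CompleteSpace 𝔹] {q : ENNReal}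
  [Fact (1 ≤ q)] {n : ℕ}

/-- The moment bound for derivatives: each of the finitely many partial derivatives of order
`i ≤ j` is of class `C^{k-i,a}`, and `n / q < (k - i) + a`, so the maximal inequality applies
to it. -/
lemma exists_moment_bd (hq' : q ≠ ⊤) {a : ℝ} (ha : 0 < a) (k j : ℕ) (hjk : j ≤ k)
    (hexp : (n : ℝ) / q.toReal + j < k + a) (x₀ : Fin n → ℝ) {R : ℝ} (hR : 0 < R) :
    ∃ C : ℝ, 0 ≤ C ∧ ∀ X : (Fin n → ℝ) → Lp 𝔹 q P, LocHolder k a X →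
      ∀ Xt : (Fin n → ℝ) → Ω → 𝔹, (∀ ω, ContDiff ℝ j fun x => Xt x ω) →
      (∀ x, ∀ i ≤ j, ∀ v : Fin i → Fin n → ℝ,
        (fun ω => iteratedFDeriv ℝ i (fun y => Xt y ω) x v)
          =ᵐ[P] (iteratedFDeriv ℝ i X x v : Lp 𝔹 q P)) →
      ∫⁻ ω, ENNReal.ofReal ((∑ i ∈ Finset.range (j + 1),
        ⨆ x ∈ closedBall x₀ R, ‖iteratedFDeriv ℝ i (fun y => Xt y ω) x‖) ^ q.toReal) ∂P ≤
      ENNReal.ofReal ((C * holderNorm k a (closedBall x₀ R) X) ^ q.toReal) := by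
  have hq : q ≠ 0 := (zero_lt_one.trans_le (Fact.out : (1 : ENNReal) ≤ q)).ne'
  have hr : 0 < q.toReal := ENNReal.toReal_pos hq hq'
  have hcore : ∀ i : Fin (j + 1), (n : ℝ) / q.toReal < ((k - i : ℕ) : ℝ) + a := by
    intro i
    have hi : (i : ℕ) ≤ j := Nat.lt_succ_iff.1 i.2
    have hi' : ((i : ℕ) : ℝ) ≤ j := by exact_mod_cast hi
    rw [Nat.cast_sub (hi.trans hjk)]
    linarith
  choose K hK0 hK using fun i : Fin (j + 1) =>
    exists_core_bd (P := P) (𝔹 := 𝔹) hq' ha (k - i) (hcore i) x₀ hR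
  refine ⟨∑ i : Fin (j + 1), ∑ _σ : Fin i → Fin n, K i,
    Finset.sum_nonneg fun i _ => Finset.sum_nonneg fun _ _ => hK0 i, fun X hX Xt hXt hv => ?_⟩
  set A := holderNorm k a (closedBall x₀ R) X with hAdef
  have hA : 0 ≤ A := holderNorm_nonneg _ _ _ _
  have hsing : ∀ i : Fin n, ‖(Pi.single i (1 : ℝ) : Fin n → ℝ)‖ ≤ 1 := by
    intro i
    rw [Pi.norm_single]
    simp
  have hW : ∀ (i : Fin (j + 1)) (σ : Fin i → Fin n), ∃ W : Ω → ENNReal, Measurable W ∧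
      (∀ᵐ ω ∂P, ∀ x ∈ closedBall x₀ R,
        ‖iteratedFDeriv ℝ i (fun y => Xt y ω) x (fun l => Pi.single (σ l) 1)‖ₑ ≤ W ω) ∧
      eLpNorm W q P ≤ ENNReal.ofReal (K i * A) := by
    intro i σ
    have hi : (i : ℕ) ≤ j := Nat.lt_succ_iff.1 i.2
    obtain ⟨h1, h2⟩ := iterated_holder hX i (hi.trans hjk) (fun l => Pi.single (σ l) 1)
      (fun l => hsing (σ l))
    refine hK i _ A h1 hA (h2 _ _ (hX.holderBd_holderNorm x₀ R))
      (fun x ω => iteratedFDeriv ℝ i (fun y => Xt y ω) x (fun l => Pi.single (σ l) 1))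
      (fun ω => ?_) (fun x => hv x i hi _)
    have := (hXt ω).continuous_iteratedFDeriv (m := (i : ℕ)) (by exact_mod_cast hi)
    exact (ContinuousMultilinearMap.apply ℝ _ 𝔹 _).continuous.comp this
  choose W hWm hWb hWn using hW
  have hle : ∀ᵐ ω ∂P, ENNReal.ofReal ((∑ i ∈ Finset.range (j + 1),
      ⨆ x ∈ closedBall x₀ R, ‖iteratedFDeriv ℝ i (fun y => Xt y ω) x‖) ^ q.toReal) ≤
      (∑ i : Fin (j + 1), ∑ σ : Fin i → Fin n, W i σ ω) ^ q.toReal := by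
    filter_upwards [ae_all_iff.2 fun i => ae_all_iff.2 fun σ => hWb i σ] with ω hω
    have hs0 : ∀ i : ℕ, 0 ≤ ⨆ x ∈ closedBall x₀ R, ‖iteratedFDeriv ℝ i (fun y => Xt y ω) x‖ :=
      fun i => Real.iSup_nonneg fun _ => Real.iSup_nonneg fun _ => norm_nonneg _
    rw [← ENNReal.ofReal_rpow_of_nonneg (Finset.sum_nonneg fun i _ => hs0 i) hr.le]
    refine ENNReal.rpow_le_rpow ?_ hr.le
    rw [ENNReal.ofReal_sum_of_nonneg fun i _ => hs0 i, Finset.sum_range]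
    refine Finset.sum_le_sum fun i _ => ?_
    by_cases htop : ∑ σ : Fin i → Fin n, W i σ ω = ⊤
    · rw [htop]
      exact le_top
    rw [ENNReal.ofReal_le_iff_le_toReal htop]
    refine Real.iSup_le (fun x => Real.iSup_le (fun hx => ?_) ENNReal.toReal_nonneg)
      ENNReal.toReal_nonneg
    rw [← ENNReal.ofReal_le_iff_le_toReal htop]
    calc ENNReal.ofReal ‖iteratedFDeriv ℝ i (fun y => Xt y ω) x‖
        ≤ ENNReal.ofReal (∑ σ : Fin i → Fin n,
          ‖iteratedFDeriv ℝ i (fun y => Xt y ω) x (fun l => Pi.single (σ l) 1)‖) :=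
          ENNReal.ofReal_le_ofReal (norm_multilinear_le_sum _)
      _ = ∑ σ : Fin i → Fin n,
          ‖iteratedFDeriv ℝ i (fun y => Xt y ω) x (fun l => Pi.single (σ l) 1)‖ₑ := by
          rw [ENNReal.ofReal_sum_of_nonneg fun _ _ => norm_nonneg _]
          simp only [ofReal_norm]
      _ ≤ _ := Finset.sum_le_sum fun σ _ => hω i σ x hx
  refine (lintegral_mono_ae hle).trans ?_
  have hsum : eLpNorm (fun ω => ∑ i : Fin (j + 1), ∑ σ : Fin i → Fin n, W i σ ω) q P ≤
      ENNReal.ofReal ((∑ i : Fin (j + 1), ∑ _σ : Fin i → Fin n, K i) * A) := by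
    rw [Finset.sum_mul]
    refine eLpNorm_sum_le_ofReal Fact.out
      (fun i => mul_nonneg (Finset.sum_nonneg fun _ _ => hK0 i) hA)
      (fun i => Finset.measurable_fun_sum _ fun σ _ => hWm i σ) fun i => ?_
    rw [Finset.sum_mul]
    exact eLpNorm_sum_le_ofReal Fact.out (fun _ => mul_nonneg (hK0 i) hA) (hWm i) (hWn i)
  rw [eLpNorm_eq_lintegral_rpow_enorm_toReal hq hq', one_div, ENNReal.rpow_inv_le_iff hr,
    ENNReal.ofReal_rpow_of_nonneg (mul_nonneg (Finset.sum_nonneg fun i _ =>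
      Finset.sum_nonneg fun _ _ => hK0 i) hA) hr.le] at hsum
  simpa only [enorm_eq_self] using hsum

end Moment

/-- (Banach-valued Kolmogorov continuity criterion.)
If `X ∈ C^{k,a}(ℝⁿ; L^p(F;𝔹))` with `k + a > n/p + j`, then `X` admits a regular version
`X̃ : ℝⁿ × Ω → 𝔹` that is `C^j` in `x` for every `ω`, measurable in `ω` for every `x`,
whose derivatives of order `≤ j` are indistinguishable from those of `X` in `L^p(F;𝔹)`;
such a version is unique up to indistinguishability, and on every ball `B = B(x₀,R)` one
has `‖ ‖X̃‖_{C^j(B;𝔹)} ‖_{L^p} ≤ C_{k,a,p,B} ‖X‖_{C^{k,a}(B;L^p)}`. -/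
theorem banach_kolmogorov_criterion
    {Ω : Type*} {mΩ : MeasurableSpace Ω} (P : Measure Ω) [IsProbabilityMeasure P]
    {𝔹 : Type*} [NormedAddCommGroup 𝔹] [NormedSpace ℝ 𝔹] [CompleteSpace 𝔹]
    (n k j : ℕ) (a : NNReal) (p : ℝ) (hp : 1 ≤ p) (ha : 0 < a ∧ a ≤ 1)
    (hexp : (n : ℝ) / p + j < k + a)
    [Fact (1 ≤ ENNReal.ofReal p)]
    (X : (Fin n → ℝ) → Lp 𝔹 (ENNReal.ofReal p) P)
    -- X ∈ C^{k,a}(ℝⁿ; L^p(F;𝔹))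
    (hXk : ContDiff ℝ k X)
    (hXa : ∀ x₀ : Fin n → ℝ, ∀ R : ℝ, 0 < R → ∃ C : NNReal,
      HolderOnWith C a (iteratedFDeriv ℝ k X) (closedBall x₀ R)) :
    (∃ Xt : (Fin n → ℝ) → Ω → 𝔹,
      -- (i) for each ω, X̃(·,ω) ∈ C^j(ℝⁿ;𝔹)
      (∀ ω, ContDiff ℝ j (fun x => Xt x ω)) ∧
      -- (ii) for each x, X̃(x,·) is measurable and the derivatives of order ≤ j are
      -- versions of the corresponding derivatives of X in L^p(F;𝔹)
      (∀ x, StronglyMeasurable (fun ω => Xt x ω)) ∧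
      (∀ x, ∀ i, i ≤ j → ∀ v : Fin i → (Fin n → ℝ),
        (fun ω => iteratedFDeriv ℝ i (fun y => Xt y ω) x v)
          =ᵐ[P] (iteratedFDeriv ℝ i X x v : Lp 𝔹 (ENNReal.ofReal p) P)) ∧
      -- uniqueness up to indistinguishability
      (∀ Xt' : (Fin n → ℝ) → Ω → 𝔹,
        (∀ ω, ContDiff ℝ j (fun x => Xt' x ω)) →
        (∀ x, StronglyMeasurable (fun ω => Xt' x ω)) →
        (∀ x, ∀ i, i ≤ j → ∀ v : Fin i → (Fin n → ℝ),
          (fun ω => iteratedFDeriv ℝ i (fun y => Xt' y ω) x v)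
            =ᵐ[P] (iteratedFDeriv ℝ i X x v : Lp 𝔹 (ENNReal.ofReal p) P)) →
        ∀ᵐ ω ∂P, ∀ x, Xt' x ω = Xt x ω)) ∧
    -- the moment bound on balls, with a constant depending only on k, a, p and the ball
    (∀ x₀ : Fin n → ℝ, ∀ R : ℝ, 0 < R → ∃ C : ℝ, 0 ≤ C ∧
      ∀ (X' : (Fin n → ℝ) → Lp 𝔹 (ENNReal.ofReal p) P), ContDiff ℝ k X' →
      (∀ y₀ : Fin n → ℝ, ∀ R' : ℝ, 0 < R' → ∃ C' : NNReal,
        HolderOnWith C' a (iteratedFDeriv ℝ k X') (closedBall y₀ R')) →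
      ∀ Xt' : (Fin n → ℝ) → Ω → 𝔹,
        (∀ ω, ContDiff ℝ j (fun x => Xt' x ω)) →
        (∀ x, StronglyMeasurable (fun ω => Xt' x ω)) →
        (∀ x, ∀ i, i ≤ j → ∀ v : Fin i → (Fin n → ℝ),
          (fun ω => iteratedFDeriv ℝ i (fun y => Xt' y ω) x v)
            =ᵐ[P] (iteratedFDeriv ℝ i X' x v : Lp 𝔹 (ENNReal.ofReal p) P)) →
        (∫⁻ ω, ENNReal.ofReal
            ((∑ i ∈ Finset.range (j + 1),
              ⨆ x ∈ closedBall x₀ R, ‖iteratedFDeriv ℝ i (fun y => Xt' y ω) x‖) ^ p) ∂P)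
          ≤ ENNReal.ofReal ((C *
              ((∑ i ∈ Finset.range (k + 1),
                  ⨆ x ∈ closedBall x₀ R, ‖iteratedFDeriv ℝ i X' x‖)
               + ⨆ x ∈ closedBall x₀ R, ⨆ y ∈ closedBall x₀ R,
                  ‖iteratedFDeriv ℝ k X' x - iteratedFDeriv ℝ k X' y‖
                    / ‖x - y‖ ^ (a : ℝ))) ^ p)) := by
  have hq' : ENNReal.ofReal p ≠ ⊤ := ENNReal.ofReal_ne_top
  have hqp : (ENNReal.ofReal p).toReal = p := ENNReal.toReal_ofReal (by linarith)
  have ha0 : (0 : ℝ) < a := by exact_mod_cast ha.1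
  have ha1 : (a : ℝ) ≤ 1 := by exact_mod_cast ha.2
  have hjk : j ≤ k := by
    have h1 : 0 ≤ (n : ℝ) / p := by positivity
    have h2 : (j : ℝ) < (k + 1 : ℕ) := by
      push_cast
      linarith
    have h3 : j < k + 1 := by exact_mod_cast h2
    omega
  have hexp' : (n : ℝ) / (ENNReal.ofReal p).toReal + j < k + (a : ℝ) := by rwa [hqp]
  refine ⟨?_, fun x₀ R hR => ?_⟩
  · obtain ⟨Xt, h1, h2, h3⟩ := exists_smooth_version hq' ha0 ha1 j k X hexp'
      (locHolder_of_holderOnWith hXk hXa)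
    refine ⟨Xt, h1, h2, fun x i hi v => iteratedFDeriv_version
      (hXk.of_le (by exact_mod_cast hjk)) h1 h3 i hi x v, fun Xt' h1' _ h3' => ?_⟩
    refine indistinguishable (Eventually.of_forall fun ω => (h1' ω).continuous)
      (Eventually.of_forall fun ω => (h1 ω).continuous) fun x => ?_
    have h4 := h3' x 0 (Nat.zero_le _) 0
    simp only [iteratedFDeriv_zero_apply] at h4
    exact h4.trans (h3 x).symm
  · obtain ⟨C, hC0, hC⟩ := exists_moment_bd (P := P) (𝔹 := 𝔹) hq' ha0 k j hjk hexp' x₀ hR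
    rw [hqp] at hC
    exact ⟨C, hC0, fun X' hX' hXa' Xt' h1 _ h3 =>
      hC X' (locHolder_of_holderOnWith hX' hXa') Xt' h1 h3⟩

end
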